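/- The lattice L_Q does not contain a sublattice isomorphic to E₈(3): there do not exist vectors w₁, …, w₈ ∈ L_Q such that ⟨wᵢ, wⱼ⟩ = 3·(G_{E₈})_{ij} for all 1 ≤ i, j ≤ 8, where G_{E₈} is the Cartan matrix of type E₈ (a Gram matrix of the E₈ root lattice). -/

import Mathlib

/-!
An `E₈(3)` in `L_Q` is excluded in two steps, a coding-theoretic one and one about `E₈`.

Let `S` be the skew Paley conference matrix of order 32 and `H = I + S`. The matrix
`K = S - 2I` satisfies `Kᵀ K = 35 I`, and `K` annihilates the code `Q` modulo 35
after rescaling by the coordinates of `u`. Combining this with the identity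
`6 ⟨x, y⟩ = 35 z z' + g g'` on each copy of `R`, where `z` is a coordinate and `g` a pairing with a
basis vector, one finds 64 pairwise orthogonal vectors of norm 3 such that twice the coordinates of
a vector of `L_Q` in this frame are integers `(P, Q)` of equal parity with `P ≡ H Q` modulo 3
(`exists_frame`).

The ternary code `{(H q, q)}` has minimum weight at least 16 (`code_min`). As `Hᵀ H = 32 I ≡ -I` and
`Hᵀ` is monomially equivalent to `H`, it suffices to treat `q` of weight `w ≤ 7`. The moments
`∑ (H q)ⱼ² = 32 w`, the parity of the `(H q)ⱼ` and the bound `|(H q)ⱼ| ≤ w` rule out `w = 1, 2, 3, 5`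
and, in the cases `w = 4, 6, 7`, produce two rows of `H` which agree up to sign on the support of `q`.
The automorphism group of `H` is transitive on ordered pairs of rows, so these rows can be taken
to be `∞` and `0`; the support then lies in a fixed set of 16 columns with known signs (up to a
choice of two negative entries if `w = 7`), and the remaining cases are enumerated by
`search4`, `search6` and `search7`.

Pairing the frame with a copy of `E₈(3)` in `L_Q` and using that `E₈` is unimodular gives 64 vectors
`eₖ` of `E₈` with `∑ (eₖ, v)² = 36 (v, v)` and `∑ (eₖ, eₖ) = 288`, congruent to each other modulo
`2E₈`, such that each word `((eₖ, v))ₖ` modulo 3 is zero or has weight at least 16. If the `eₖ` are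
outside `2E₈`, some `eₖ` has norm 2 or 4, since the average norm is 4.5, and both are impossible by
weighted counts (`Tight.false_odd`). Otherwise the halves `eₖ / 2` form a frame with constant 9, and the
words of the simple roots lead to a contradiction (`Tight.false_nine`).
-/

noncomputable section

/-- The projective line over `F₃₁`: `none` is the point `∞`. -/
abbrev P1 : Type := Option (ZMod 31)

/-- The generator `v_μ` of the generalized quadratic residue code `Q` with
parameters `(a,b,d,s,t,e) = (0,0,1,7,3,2)`:
`v_μ(μ) = 1`, `v_μ(ν) = 7` if `χ(μ-ν) = 1`, `v_μ(ν) = 3` if `χ(μ-ν) = -1`, `v_μ(∞) = 2`. -/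
def vgen (μ : ZMod 31) : P1 → ZMod 35 := fun ν =>
  match ν with
  | none => 2
  | some ν' => if ν' = μ then 1 else if IsSquare (μ - ν') then 7 else 3

/-- The generalized quadratic residue code `Q`, a subgroup of `(ℤ/35ℤ)^{P¹(F₃₁)}`. -/
def Qcode : AddSubgroup (P1 → ZMod 35) := AddSubgroup.closure (Set.range vgen)
/-- The generator `u = (34 e₁ + 6 e₂)/35` of the discriminant group `D_R = R∨/R ≅ ℤ/35ℤ`. -/
def uvec : Fin 2 → ℚ := ![34/35, 6/35]

/-- The bilinear form `⟨x,y⟩ = xᵀ G y` on `ℚ²`, with `G = [[6,1],[1,6]]`. -/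
def B2 (x y : Fin 2 → ℚ) : ℚ :=
  6 * x 0 * y 0 + x 0 * y 1 + x 1 * y 0 + 6 * x 1 * y 1

/-- Membership in the lattice `R = ℤ² ⊆ ℚ²`. -/
def inRlat (x : Fin 2 → ℚ) : Prop := ∀ i, ∃ k : ℤ, x i = (k : ℚ)
/-- The lattice `L_Q ⊆ (R∨)³² ⊆ ℚ⁶⁴`: the preimage of the code `Q` under the natural
projection `(R∨)³² → (D_R)³² ≅ (ℤ/35ℤ)³²`.  A vector `x` belongs to `L_Q` iff there is a
codeword `w ∈ Q` such that for every `ν ∈ P¹(F₃₁)` the component `x ν` is congruent to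
`w(ν)·u` modulo `R = ℤ²`. -/
def LQ : Set (P1 → Fin 2 → ℚ) :=
  {x | ∃ w ∈ Qcode, ∀ ν : P1, ∃ m : ℤ,
    (m : ZMod 35) = w ν ∧ inRlat (x ν - (m : ℚ) • uvec)}

/-- The orthogonal direct-sum bilinear form of 32 copies of `R∨`. -/
def Bf (x y : P1 → Fin 2 → ℚ) : ℚ := ∑ ν : P1, B2 (x ν) (y ν)

/-- The Cartan matrix of type `E₈` (a Gram matrix of the `E₈` root lattice),
in the Bourbaki numbering. -/
def E8mat : Matrix (Fin 8) (Fin 8) ℚ :=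
  !![ 2,  0, -1,  0,  0,  0,  0,  0;
      0,  2,  0, -1,  0,  0,  0,  0;
     -1,  0,  2, -1,  0,  0,  0,  0;
      0, -1, -1,  2, -1,  0,  0,  0;
      0,  0,  0, -1,  2, -1,  0,  0;
      0,  0,  0,  0, -1,  2, -1,  0;
      0,  0,  0,  0,  0, -1,  2, -1;
      0,  0,  0,  0,  0,  0, -1,  2]

namespace E8Q

/-! ### The Paley conference matrix and a coordinate frame for `L_Q` -/

/-- Whether a residue class modulo 31 is a nonzero square. -/
def isRes (x : ZMod 31) : Bool :=
  [1, 2, 4, 5, 7, 8, 9, 10, 14, 16, 18, 19, 20, 25, 28].elem x.val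

/-- The Legendre symbol on `F₃₁`. -/
def chi (x : ZMod 31) : ℤ := if x = 0 then 0 else if isRes x then 1 else -1

/-- The skew-symmetric Paley conference matrix of order 32. -/
def S : P1 → P1 → ℤ
  | none, none => 0
  | none, some _ => 1
  | some _, none => -1
  | some i, some j => chi (i - j)

/-- The skew Hadamard matrix `I + S`. -/
def H (i j : P1) : ℤ := S i j + if i = j then 1 else 0

/-- The matrix `S - 2I`, which satisfies `K Kᵀ = 35 I`. -/
def K (i j : P1) : ℤ := S i j - if i = j then 2 else 0

lemma isSquare_iff : ∀ x : ZMod 31, x ≠ 0 → (IsSquare x ↔ isRes x = true) := by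
  decide +kernel

lemma S_skew : ∀ i j, S j i = - S i j := by decide +kernel

lemma S_mul : ∀ i j, ∑ k, S i k * S k j = if i = j then -31 else 0 := by decide +kernel

/-- `35` times the coordinate of `u` used at `ν` by `zc`: the first one at a finite place,
the second one at `∞`. -/
def cz : P1 → ℤ
  | none => 6
  | some _ => 34

lemma vgenK_aux : ∀ (r : P1) (μ : ZMod 31),
    ∑ ν : P1, (K r ν : ZMod 35) * (cz ν : ZMod 35) *
      (match ν with
       | none => 2
       | some ν' => if ν' = μ then 1 else if isRes (μ - ν') then 7 else 3) = 0 := by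
  decide +kernel

lemma vgenK (r : P1) (μ : ZMod 31) :
    ∑ ν : P1, (K r ν : ZMod 35) * (cz ν : ZMod 35) * vgen μ ν = 0 := by
  rw [← vgenK_aux r μ]
  refine Finset.sum_congr rfl fun ν _ => ?_
  congr 1
  rcases ν with _ | ν
  · rfl
  · simp only [vgen]
    by_cases h : ν = μ
    · simp [h]
    · simp only [h, if_false]
      have : μ - ν ≠ 0 := sub_ne_zero.2 (Ne.symm h)
      have h2 := isSquare_iff _ this
      by_cases h3 : IsSquare (μ - ν)
      · rw [if_pos h3, if_pos (h2.1 h3)]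
      · rw [if_neg h3, if_neg (fun h4 => h3 (h2.2 h4))]

lemma QcodeK {w : P1 → ZMod 35} (hw : w ∈ Qcode) (r : P1) :
    ∑ ν : P1, (K r ν : ZMod 35) * (cz ν : ZMod 35) * w ν = 0 := by
  induction hw using AddSubgroup.closure_induction with
  | mem x hx => obtain ⟨μ, rfl⟩ := hx; exact vgenK r μ
  | zero => simp
  | add x y _ _ hx hy => simp [mul_add, Finset.sum_add_distrib, hx, hy]
  | neg x _ hx => simp [hx]

/-- The coordinate of `x ν` along `e₁` at a finite place and along `e₂` at `∞`. -/
def zc (x : P1 → Fin 2 → ℚ) : P1 → ℚ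
  | none => x none 1
  | some i => x (some i) 0

/-- The other coordinate of `x ν`. -/
def oc (x : P1 → Fin 2 → ℚ) : P1 → ℚ
  | none => x none 0
  | some i => x (some i) 1

/-- The pairing of `x ν` with `e₂` at a finite place and with `e₁` at `∞`. -/
def gc (x : P1 → Fin 2 → ℚ) (ν : P1) : ℚ := zc x ν + 6 * oc x ν

/-- The coordinates `K z`; together with `gc` they are the pairings of `x` with 64 pairwise
orthogonal norm 6 vectors. -/
def hc (x : P1 → Fin 2 → ℚ) (ν : P1) : ℚ := ∑ μ, (K ν μ : ℚ) * zc x μ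

lemma B2_eq (x y : P1 → Fin 2 → ℚ) (ν : P1) :
    6 * B2 (x ν) (y ν) = 35 * (zc x ν * zc y ν) + gc x ν * gc y ν := by
  rcases ν with _ | ν <;> simp only [B2, gc, zc, oc] <;> ring

lemma K_tmul (i j : P1) : ∑ k, (K k i : ℚ) * K k j = if i = j then 35 else 0 := by
  have h := S_mul i j
  have h1 : ∑ k, K k i * K k j = if i = j then 35 else 0 := by
    have : ∀ k, K k i * K k j = -(S i k * S k j) - (if k = i then 2 * S k j else 0)
        - (if k = j then 2 * S k i else 0) + (if k = i then (if k = j then 4 else 0) else 0) := by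
      intro k
      have h1 := S_skew i k
      have h2 := S_skew i i
      simp only [K]
      by_cases hi : k = i
      · subst hi
        have h3 : S k k = 0 := by linarith
        by_cases hj : k = j
        · subst hj; simp [h3]
        · simp [hj, h3]
      · by_cases hj : k = j
        · subst hj; simp [hi, h1]; ring
        · simp [hi, hj, h1]
    simp only [this, Finset.sum_add_distrib, Finset.sum_sub_distrib, Finset.sum_neg_distrib, h,
      Finset.sum_ite_eq', Finset.mem_univ, if_true]
    have := S_skew i j
    split_ifs with hij
    · subst hij; linarith
    · linarith
  exact_mod_cast h1

lemma Kt_hc (x : P1 → Fin 2 → ℚ) (ν : P1) : ∑ μ, (K μ ν : ℚ) * hc x μ = 35 * zc x ν := by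
  simp only [hc, Finset.mul_sum]
  rw [Finset.sum_comm]
  simp only [← mul_assoc, ← Finset.sum_mul, K_tmul]
  simp

lemma hc_inner (x y : P1 → Fin 2 → ℚ) :
    ∑ ν, hc x ν * hc y ν = 35 * ∑ ν, zc x ν * zc y ν := by
  have : ∀ ν, hc x ν * hc y ν = ∑ μ, zc x μ * ((K ν μ : ℚ) * hc y ν) := by
    intro ν
    rw [hc, Finset.sum_mul]
    exact Finset.sum_congr rfl fun μ _ => by ring
  simp only [this]
  rw [Finset.sum_comm]
  simp only [← Finset.mul_sum, Kt_hc]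
  rw [Finset.mul_sum]
  exact Finset.sum_congr rfl fun μ _ => by ring

lemma Bf_eq (x y : P1 → Fin 2 → ℚ) :
    6 * Bf x y = ∑ ν, (hc x ν * hc y ν + gc x ν * gc y ν) := by
  rw [Finset.sum_add_distrib, hc_inner, Bf, Finset.mul_sum, Finset.mul_sum,
    ← Finset.sum_add_distrib]
  exact Finset.sum_congr rfl fun ν _ => B2_eq x y ν

/-- On `L_Q` the frame coordinates are integers subject to a congruence modulo 6. -/
lemma exists_coords {x : P1 → Fin 2 → ℚ} (hx : x ∈ LQ) :
    ∃ η g : P1 → ℤ, (∀ ν, hc x ν = η ν) ∧ (∀ ν, gc x ν = g ν) ∧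
      ∀ ν, (6 : ℤ) ∣ 35 * g ν - ∑ μ, K μ ν * η μ := by
  obtain ⟨w, hw, h⟩ := hx
  choose m hm hr using h
  choose r hr using hr
  have h0 : ∀ ν, x ν 0 = m ν * (34 / 35) + r ν 0 := fun ν => by
    have := hr ν 0
    simp [uvec] at this; linarith
  have h1 : ∀ ν, x ν 1 = m ν * (6 / 35) + r ν 1 := fun ν => by
    have := hr ν 1
    simp [uvec] at this; linarith
  have hz : ∃ s : P1 → ℤ, ∀ ν, zc x ν = m ν * cz ν / 35 + s ν := by
    refine ⟨fun ν => match ν with | none => r none 1 | some i => r (some i) 0, ?_⟩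
    rintro (_ | i)
    · simp only [zc, cz, h1]; push_cast; ring
    · simp only [zc, cz, h0]; push_cast; ring
  obtain ⟨s, hs⟩ := hz
  have hη : ∀ ν, ∃ k : ℤ, hc x ν = k := by
    intro ν
    have hd : (35 : ℤ) ∣ ∑ μ, K ν μ * cz μ * m μ := by
      have := QcodeK hw ν
      simp only [← hm] at this
      refine (ZMod.intCast_zmod_eq_zero_iff_dvd _ 35).1 ?_
      push_cast
      exact this
    obtain ⟨k, hk⟩ := hd
    refine ⟨k + ∑ μ, K ν μ * s μ, ?_⟩
    have hk' : ∑ μ, (K ν μ : ℚ) * cz μ * m μ = 35 * k := by exact_mod_cast hk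
    have : hc x ν = (∑ μ, (K ν μ : ℚ) * cz μ * m μ) / 35 + ∑ μ, (K ν μ : ℚ) * s μ := by
      rw [hc, Finset.sum_div, ← Finset.sum_add_distrib]
      exact Finset.sum_congr rfl fun μ _ => by rw [hs]; ring
    rw [this, hk']; push_cast; ring
  have hg : ∀ ν, ∃ k : ℤ, gc x ν = k := by
    rintro (_ | i)
    · refine ⟨6 * m none + r none 1 + 6 * r none 0, ?_⟩
      simp only [gc, zc, oc, h0, h1]; push_cast; ring
    · refine ⟨2 * m (some i) + r (some i) 0 + 6 * r (some i) 1, ?_⟩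
      simp only [gc, zc, oc, h0, h1]; push_cast; ring
  have ho : ∀ ν, ∃ k : ℤ, 35 * oc x ν = k := by
    rintro (_ | i)
    · refine ⟨34 * m none + 35 * r none 0, ?_⟩
      simp only [oc, h0]; push_cast; ring
    · refine ⟨6 * m (some i) + 35 * r (some i) 1, ?_⟩
      simp only [oc, h1]; push_cast; ring
  choose η hη using hη
  choose g hg using hg
  refine ⟨η, g, hη, hg, fun ν => ?_⟩
  obtain ⟨k, hk⟩ := ho ν
  refine ⟨k, ?_⟩
  have h3 := Kt_hc x ν
  simp only [hη] at h3
  have h4 := hg ν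
  rw [gc] at h4
  have : (35 : ℚ) * g ν - ∑ μ, (K μ ν : ℚ) * η μ = 6 * k := by
    rw [h3, ← h4, ← hk]; ring
  exact_mod_cast this

lemma H_mulVec_mod {η g : P1 → ℤ}
    (h : ∀ ν, (6 : ℤ) ∣ 35 * g ν - ∑ μ, K μ ν * η μ) (ν : P1) :
    (3 : ℤ) ∣ (η ν + g ν) - ∑ μ, H ν μ * (η μ - g μ) := by
  -- Modulo 3 one has `g = (S + 2I) η` and `S² = -31 I = -I`.
  have hS : ∀ ν μ, ((∑ κ, S ν κ * S κ μ : ℤ) : ZMod 3) = if ν = μ then -1 else 0 := by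
    intro ν μ
    rw [S_mul]; split_ifs <;> rfl
  have hg : ∀ ν, (g ν : ZMod 3) = ∑ μ, (S ν μ : ZMod 3) * η μ + 2 * η ν := by
    intro ν
    have h3 : (3 : ℤ) ∣ 35 * g ν - ∑ μ, K μ ν * η μ := dvd_trans (by norm_num) (h ν)
    have h4 : ((35 * g ν - ∑ μ, K μ ν * η μ : ℤ) : ZMod 3) = 0 :=
      (ZMod.intCast_zmod_eq_zero_iff_dvd _ 3).2 h3
    have h5 : ∑ μ, K μ ν * η μ = -(∑ μ, S ν μ * η μ) - 2 * η ν := by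
      have : ∀ μ, K μ ν * η μ = -(S ν μ * η μ) - if μ = ν then 2 * η μ else 0 := by
        intro μ
        rw [K, S_skew ν μ]
        split_ifs <;> ring
      simp [this, Finset.sum_sub_distrib]
    rw [h5] at h4
    push_cast at h4
    have e35 : (35 : ZMod 3) = -1 := rfl
    rw [e35] at h4
    linear_combination -h4
  refine (ZMod.intCast_zmod_eq_zero_iff_dvd _ 3).1 ?_
  have hH : ∑ μ, H ν μ * (η μ - g μ) = ∑ μ, S ν μ * (η μ - g μ) + (η ν - g ν) := by
    simp [H, add_mul, Finset.sum_add_distrib]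
  have hSS : ∑ μ, (S ν μ : ZMod 3) * ∑ κ, (S μ κ : ZMod 3) * η κ = - η ν := by
    simp only [Finset.mul_sum]
    rw [Finset.sum_comm]
    have := hS ν
    push_cast at this
    simp only [← mul_assoc, ← Finset.sum_mul, this]
    simp
  have hSg : ∑ μ, (S ν μ : ZMod 3) * (η μ - g μ) = η ν - ∑ μ, (S ν μ : ZMod 3) * η μ := by
    have : ∀ μ, (S ν μ : ZMod 3) * (η μ - g μ)
        = -((S ν μ : ZMod 3) * ∑ κ, (S μ κ : ZMod 3) * η κ) - (S ν μ : ZMod 3) * η μ := by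
      intro μ; rw [hg]; ring
    simp only [this, Finset.sum_sub_distrib, Finset.sum_neg_distrib, hSS]
    ring
  rw [hH]
  push_cast
  rw [hSg, hg ν]
  have e3 : (3 : ZMod 3) = 0 := rfl
  linear_combination (∑ μ, (S ν μ : ZMod 3) * η μ + η ν) * e3

lemma coords_parity {η g : P1 → ℤ}
    (h : ∀ ν, (6 : ℤ) ∣ 35 * g ν - ∑ μ, K μ ν * η μ) (ν : P1) :
    (2 : ℤ) ∣ (η ν + g ν) - ∑ μ, η μ := by
  have hK : ∀ μ ν, ((K μ ν : ℤ) : ZMod 2) = if μ = ν then 0 else 1 := by decide +kernel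
  have h4 : ((35 * g ν - ∑ μ, K μ ν * η μ : ℤ) : ZMod 2) = 0 :=
    (ZMod.intCast_zmod_eq_zero_iff_dvd _ 2).2 (dvd_trans (by norm_num) (h ν))
  refine (ZMod.intCast_zmod_eq_zero_iff_dvd _ 2).1 ?_
  push_cast at h4 ⊢
  have h5 : ∑ μ, ((K μ ν : ℤ) : ZMod 2) * η μ = ∑ μ, (η μ : ZMod 2) - η ν := by
    have : ∀ μ, ((K μ ν : ℤ) : ZMod 2) * η μ
        = (η μ : ZMod 2) - if μ = ν then (η μ : ZMod 2) else 0 := by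
      intro μ; rw [hK]; split_ifs <;> ring
    simp [this, Finset.sum_sub_distrib]
  rw [h5] at h4
  have e2 : (2 : ZMod 2) = 0 := rfl
  linear_combination h4 - 17 * (g ν : ZMod 2) * e2

/-- Twice the coordinates of vectors of `L_Q` with respect to an orthogonal frame of 64 vectors
of norm 3, indexed by two copies of `P¹(F₃₁)`: they are integers of equal parity, and modulo 3
they form a word of the ternary code with generator matrix `[H | I]`. -/
lemma exists_frame {w : Fin 8 → P1 → Fin 2 → ℚ} (hw : ∀ i, w i ∈ LQ) :
    ∃ P Q : P1 → Fin 8 → ℤ,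
      (∀ i j, ∑ ν, ((P ν i : ℚ) * P ν j + Q ν i * Q ν j) = 12 * Bf (w i) (w j)) ∧
      (∀ i, ∃ e : ℤ, ∀ ν, 2 ∣ P ν i - e ∧ 2 ∣ Q ν i - e) ∧
      (∀ i ν, 3 ∣ P ν i - ∑ μ, H ν μ * Q μ i) := by
  choose η g hη hg hd using fun i => exists_coords (hw i)
  refine ⟨fun ν i => η i ν + g i ν, fun ν i => η i ν - g i ν, fun i j => ?_, fun i => ?_,
    fun i ν => H_mulVec_mod (hd i) ν⟩
  · have := Bf_eq (w i) (w j)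
    simp only [hη, hg] at this
    have h2 : (12 : ℚ) * Bf (w i) (w j) = 2 * (6 * Bf (w i) (w j)) := by ring
    rw [h2, this, Finset.mul_sum]
    exact Finset.sum_congr rfl fun ν _ => by push_cast; ring
  · refine ⟨∑ μ, η i μ, fun ν => ?_⟩
    have := coords_parity (hd i) ν
    refine ⟨this, ?_⟩
    change (2 : ℤ) ∣ η i ν - g i ν - _
    omega

/-! ### The lattice `E₈` -/

/-- The Cartan matrix of type `E₈` over the integers. -/
def A8 : Matrix (Fin 8) (Fin 8) ℤ :=
  !![ 2,  0, -1,  0,  0,  0,  0,  0;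
      0,  2,  0, -1,  0,  0,  0,  0;
     -1,  0,  2, -1,  0,  0,  0,  0;
      0, -1, -1,  2, -1,  0,  0,  0;
      0,  0,  0, -1,  2, -1,  0,  0;
      0,  0,  0,  0, -1,  2, -1,  0;
      0,  0,  0,  0,  0, -1,  2, -1;
      0,  0,  0,  0,  0,  0, -1,  2]

/-- The inverse of the `E₈` Cartan matrix. -/
def A8inv : Matrix (Fin 8) (Fin 8) ℤ :=
  !![4, 5, 7, 10, 8, 6, 4, 2;
     5, 8, 10, 15, 12, 9, 6, 3;
     7, 10, 14, 20, 16, 12, 8, 4;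
     10, 15, 20, 30, 24, 18, 12, 6;
     8, 12, 16, 24, 20, 15, 10, 5;
     6, 9, 12, 18, 15, 12, 8, 4;
     4, 6, 8, 12, 10, 8, 6, 3;
     2, 3, 4, 6, 5, 4, 3, 2]

lemma A8_mul : A8 * A8inv = 1 := by decide +kernel

lemma A8_symm : A8.transpose = A8 := by decide +kernel

open Matrix in
/-- The bilinear form of `E₈ = ℤ⁸`. -/
def b (v w : Fin 8 → ℤ) : ℤ := v ⬝ᵥ A8 *ᵥ w

lemma b_symm (v w : Fin 8 → ℤ) : b v w = b w v := by
  rw [b, b, Matrix.dotProduct_mulVec, ← Matrix.mulVec_transpose, A8_symm, dotProduct_comm]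

lemma b_add_left (u v w : Fin 8 → ℤ) : b (u + v) w = b u w + b v w := by
  simp [b, add_dotProduct]

lemma b_smul_left (c : ℤ) (v w : Fin 8 → ℤ) : b (c • v) w = c * b v w := by
  rw [b, b, smul_dotProduct, smul_eq_mul]

lemma b_add_right (u v w : Fin 8 → ℤ) : b u (v + w) = b u v + b u w := by
  simp [b_symm u, b_add_left]

lemma b_smul_right (c : ℤ) (v w : Fin 8 → ℤ) : b v (c • w) = c * b v w := by
  rw [b_symm, b_smul_left, b_symm]

lemma b_self (v : Fin 8 → ℤ) : b v v = 2 * (v 0 ^ 2 + v 1 ^ 2 + v 2 ^ 2 + v 3 ^ 2 + v 4 ^ 2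
    + v 5 ^ 2 + v 6 ^ 2 + v 7 ^ 2 - v 0 * v 2 - v 1 * v 3 - v 2 * v 3 - v 3 * v 4 - v 4 * v 5
    - v 5 * v 6 - v 6 * v 7) := by
  simp [b, Matrix.mulVec, dotProduct, Fin.sum_univ_eight, A8]
  ring

lemma b_even (v : Fin 8 → ℤ) : 2 ∣ b v v := ⟨_, b_self v⟩

lemma b_sos (v : Fin 8 → ℤ) : 60 * b v v = 30 * (2 * v 0 - v 2) ^ 2 + 30 * (2 * v 1 - v 3) ^ 2
    + 10 * (3 * v 2 - 2 * v 3) ^ 2 + 2 * (5 * v 3 - 6 * v 4) ^ 2 + 3 * (4 * v 4 - 5 * v 5) ^ 2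
    + 5 * (3 * v 5 - 4 * v 6) ^ 2 + 10 * (2 * v 6 - 3 * v 7) ^ 2 + 30 * v 7 ^ 2 := by
  rw [b_self]; ring

lemma b_nonneg (v : Fin 8 → ℤ) : 0 ≤ b v v := by
  have := b_sos v
  nlinarith [sq_nonneg (2 * v 0 - v 2), sq_nonneg (2 * v 1 - v 3), sq_nonneg (3 * v 2 - 2 * v 3),
    sq_nonneg (5 * v 3 - 6 * v 4), sq_nonneg (4 * v 4 - 5 * v 5), sq_nonneg (3 * v 5 - 4 * v 6),
    sq_nonneg (2 * v 6 - 3 * v 7), sq_nonneg (v 7)]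

lemma b_eq_zero {v : Fin 8 → ℤ} (h : b v v = 0) : v = 0 := by
  have hs := b_sos v
  rw [h] at hs
  have n0 := sq_nonneg (2 * v 0 - v 2)
  have n1 := sq_nonneg (2 * v 1 - v 3)
  have n2 := sq_nonneg (3 * v 2 - 2 * v 3)
  have n3 := sq_nonneg (5 * v 3 - 6 * v 4)
  have n4 := sq_nonneg (4 * v 4 - 5 * v 5)
  have n5 := sq_nonneg (3 * v 5 - 4 * v 6)
  have n6 := sq_nonneg (2 * v 6 - 3 * v 7)
  have n7 := sq_nonneg (v 7)
  have z0 := pow_eq_zero_iff (two_ne_zero) |>.1 (show (2 * v 0 - v 2) ^ 2 = 0 by linarith)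
  have z1 := pow_eq_zero_iff (two_ne_zero) |>.1 (show (2 * v 1 - v 3) ^ 2 = 0 by linarith)
  have z2 := pow_eq_zero_iff (two_ne_zero) |>.1 (show (3 * v 2 - 2 * v 3) ^ 2 = 0 by linarith)
  have z3 := pow_eq_zero_iff (two_ne_zero) |>.1 (show (5 * v 3 - 6 * v 4) ^ 2 = 0 by linarith)
  have z4 := pow_eq_zero_iff (two_ne_zero) |>.1 (show (4 * v 4 - 5 * v 5) ^ 2 = 0 by linarith)
  have z5 := pow_eq_zero_iff (two_ne_zero) |>.1 (show (3 * v 5 - 4 * v 6) ^ 2 = 0 by linarith)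
  have z6 := pow_eq_zero_iff (two_ne_zero) |>.1 (show (2 * v 6 - 3 * v 7) ^ 2 = 0 by linarith)
  have z7 := pow_eq_zero_iff (two_ne_zero) |>.1 (show (v 7) ^ 2 = 0 by linarith)
  funext i
  fin_cases i <;> simp <;> omega

lemma two_le_b {v : Fin 8 → ℤ} (h : v ≠ 0) : 2 ≤ b v v := by
  have h1 := b_nonneg v
  have h2 := b_even v
  have h3 : b v v ≠ 0 := fun h' => h (b_eq_zero h')
  omega

open Matrix in
lemma b_dual (y v : Fin 8 → ℤ) : b (A8inv *ᵥ y) v = y ⬝ᵥ v := by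
  rw [b_symm, b, Matrix.mulVec_mulVec, A8_mul, Matrix.one_mulVec, dotProduct_comm]

/-! ### Excluding `E₈(3)` given the minimum weight of the code -/

section Frame

variable {κ : Type} [Fintype κ]

/-- A family of `E₈` vectors forming a tight frame with constant `m` (a eutactic star), all of
whose coefficient words modulo 3 are zero or have weight at least 16. -/
structure Tight (m : ℤ) (e : κ → Fin 8 → ℤ) : Prop where
  sum_sq : ∀ v, ∑ k, b (e k) v ^ 2 = m * b v v
  trace : ∑ k, b (e k) (e k) = 8 * m
  code : ∀ v, (∃ k, ¬ (3 : ℤ) ∣ b (e k) v) →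
    16 ≤ (Finset.univ.filter fun k => ¬ (3 : ℤ) ∣ b (e k) v).card

variable {m : ℤ} {e : κ → Fin 8 → ℤ}

/-- The minimum weight bound in the form of a weighted count. -/
lemma Tight.le_sum (h : Tight m e) {v : Fin 8 → ℤ} {k₀ : κ} (hk : ¬ (3 : ℤ) ∣ b (e k₀) v)
    {f : κ → ℤ} {c : ℤ} (hc : 0 ≤ c) (hf : ∀ k, 0 ≤ f k)
    (hf' : ∀ k, ¬ (3 : ℤ) ∣ b (e k) v → c ≤ f k) : 16 * c ≤ ∑ k, f k := by
  have h1 := h.code v ⟨k₀, hk⟩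
  set s := Finset.univ.filter fun k => ¬ (3 : ℤ) ∣ b (e k) v with hs
  have h2 : ∑ k ∈ s, c ≤ ∑ k ∈ s, f k := by
    refine Finset.sum_le_sum fun k hk => hf' k ?_
    simpa [hs] using hk
  have h3 : ∑ k ∈ s, f k ≤ ∑ k, f k :=
    Finset.sum_le_univ_sum_of_nonneg hf
  have h4 : ∑ k ∈ s, c = s.card * c := by simp
  have h5 : (16 : ℤ) ≤ s.card := by exact_mod_cast h1
  nlinarith

lemma sq_one_of {c : ℤ} (h : ¬ (3 : ℤ) ∣ c) : 1 ≤ c ^ 2 := by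
  have : c ≠ 0 := fun h' => h (by simp [h'])
  have := sq_nonneg c
  have : c ^ 2 ≠ 0 := by positivity
  omega

/-- With frame constant 9 no member of the frame is a root: otherwise the word of that root
has an entry 2, while its squares add up to 18. -/
lemma Tight.four_le (h : Tight 9 e) {k : κ} (hk : e k ≠ 0) : 4 ≤ b (e k) (e k) := by
  by_contra hlt
  have h1 := two_le_b hk
  have h2 := b_even (e k)
  have h3 : b (e k) (e k) = 2 := by omega
  have hs := h.sum_sq (e k)
  rw [h3] at hs
  classical
  have := h.le_sum (v := e k) (k₀ := k) (by rw [h3]; norm_num)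
    (f := fun j => b (e j) (e k) ^ 2 - if j = k then 3 else 0) (c := 1) (by norm_num)
    (fun j => by
      by_cases hj : j = k
      · subst hj; simp [h3]
      · simp only [hj, if_false, sub_zero]; exact sq_nonneg _)
    (fun j hj => by
      by_cases hj' : j = k
      · subst hj'; simp [h3]
      · simp only [hj', if_false, sub_zero]; exact sq_one_of hj)
  rw [Finset.sum_sub_distrib, hs] at this
  simp at this

/-- A root with nonzero word modulo 3 has all coefficients `±1` on the support of the frame and
0 elsewhere: its squares add up to 18, and so does the size of the support. -/
lemma Tight.good (h : Tight 9 e) {r : Fin 8 → ℤ} (hr : b r r = 2) {k₀ : κ}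
    (hk : ¬ (3 : ℤ) ∣ b (e k₀) r) (k : κ) :
    -1 ≤ b (e k) r ∧ b (e k) r ≤ 1 ∧ (e k ≠ 0 → b (e k) r ≠ 0) := by
  classical
  have hs := h.sum_sq r
  rw [hr] at hs
  have hle : ∀ j, -1 ≤ b (e j) r ∧ b (e j) r ≤ 1 := by
    intro j
    by_contra hj
    have hj2 : 4 ≤ b (e j) r ^ 2 := by
      have : 2 ≤ b (e j) r ∨ b (e j) r ≤ -2 := by omega
      rcases this with h' | h' <;> nlinarith
    -- An entry 2 or more wastes at least 3 units of norm.
    have := h.le_sum hk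
      (f := fun i => b (e i) r ^ 2 - if i = j then 3 else 0) (c := 1) (by norm_num)
      (fun i => by
        by_cases hj : i = j
        · subst hj; simp only [if_true]; linarith
        · simp only [hj, if_false, sub_zero]; exact sq_nonneg _)
      (fun i hi => by
        by_cases hj' : i = j
        · subst hj'; simp only [if_true]; linarith
        · simp only [hj', if_false, sub_zero]; exact sq_one_of hi)
    rw [Finset.sum_sub_distrib, hs] at this
    simp at this
  refine ⟨(hle k).1, (hle k).2, fun hek h0 => ?_⟩
  -- Comparing `∑ N(eₖ) = 72` with `N(eₖ) ≥ 4 b(eₖ, r)²` shows that the supports agree.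
  have hp : ∀ j, 0 ≤ b (e j) (e j) - 4 * b (e j) r ^ 2 := by
    intro j
    by_cases hj : e j = 0
    · have : b (e j) r = 0 := by rw [hj]; simp [b]
      rw [this]; have := b_nonneg (e j); linarith
    · have h1 := h.four_le hj
      have h2 : b (e j) r ^ 2 ≤ 1 := by have := hle j; nlinarith
      linarith
  have hsum : ∑ j, (b (e j) (e j) - 4 * b (e j) r ^ 2) = 0 := by
    rw [Finset.sum_sub_distrib, h.trace, ← Finset.mul_sum, hs]; norm_num
  have := (Finset.sum_eq_zero_iff_of_nonneg fun j _ => hp j).1 hsum k (Finset.mem_univ k)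
  have h4 := h.four_le hek
  rw [h0] at this
  omega

lemma A8_adj : ∀ i : Fin 8, ∃ j : Fin 8, b (Pi.single i 1) (Pi.single j 1) = -1 := by
  decide +kernel

lemma A8_root : ∀ i : Fin 8, b (Pi.single i 1) (Pi.single i 1) = 2 := by decide +kernel

/-- No tight frame of constant 9: two adjacent roots with nonzero words would have a sum with
even word and norm 18, and a root with a zero word cannot be adjacent to one with nonzero word;
if all simple roots have zero word, the frame vectors are divisible by 3 and too long. -/
lemma Tight.false_nine (h : Tight 9 e) : False := by
  classical
  have hbad : ∀ i k, (3 : ℤ) ∣ b (e k) (Pi.single i 1) := by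
    by_contra! hcon
    obtain ⟨i, k, hk⟩ := hcon
    obtain ⟨j, hij⟩ := A8_adj i
    have hg := h.good (A8_root i) hk
    set r := (Pi.single i 1 : Fin 8 → ℤ)
    set r' := (Pi.single j 1 : Fin 8 → ℤ) with hr'
    have hrr : b (r + r') (r + r') = 2 := by
      have h1 := A8_root i
      have h2 := A8_root j
      rw [b_add_left, b_add_right, b_add_right, b_symm r' r, hij]
      change b r r + -1 + (-1 + b r' r') = 2
      change b r r = 2 at h1
      change b r' r' = 2 at h2
      omega
    by_cases hj : ∃ k', ¬ (3 : ℤ) ∣ b (e k') r'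
    · obtain ⟨k', hk'⟩ := hj
      have hg' := h.good (A8_root j) hk'
      have hs := h.sum_sq (r + r')
      rw [hrr] at hs
      have : (4 : ℤ) ∣ ∑ k, b (e k) (r + r') ^ 2 := by
        refine Finset.dvd_sum fun l _ => ?_
        by_cases hl : e l = 0
        · rw [hl]; simp [b]
        · obtain ⟨a1, a2, a3⟩ := hg l
          obtain ⟨b1, b2, b3⟩ := hg' l
          have a4 := a3 hl
          have b4 := b3 hl
          rw [b_add_right]
          have : (2 : ℤ) ∣ b (e l) r + b (e l) r' := by
            change -1 ≤ b (e l) r' at b1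
            change b (e l) r' ≤ 1 at b2
            change b (e l) r' ≠ 0 at b4
            omega
          have := pow_dvd_pow_of_dvd this 2
          simpa using this
      rw [hs] at this
      norm_num at this
    · push Not at hj
      have hs := h.sum_sq r'
      have hex : ∃ l, b (e l) r' ≠ 0 := by
        by_contra! hz
        have h2 := A8_root j
        change b r' r' = 2 at h2
        simp [hz, h2] at hs
      obtain ⟨l, hl⟩ := hex
      have hk2 : ¬ (3 : ℤ) ∣ b (e k) (r + r') := by
        rw [b_add_right]
        have := hj k
        omega
      have h1 := h.good hrr hk2 l
      rw [b_add_right] at h1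
      have h2 := hg l
      have h3 := hj l
      omega
  have hcoord : ∀ k, ∃ x, e k = (3 : ℤ) • x := by
    intro k
    choose c hc using fun i => hbad i k
    refine ⟨A8inv.mulVec c, ?_⟩
    have hAe : A8.mulVec (e k) = (3 : ℤ) • c := by
      funext i
      have := hc i
      rw [b_symm, b] at this
      simpa using this
    have hinv : A8inv * A8 = 1 := by decide +kernel
    calc e k = A8inv.mulVec (A8.mulVec (e k)) := by
          rw [Matrix.mulVec_mulVec, hinv, Matrix.one_mulVec]
      _ = _ := by rw [hAe, Matrix.mulVec_smul]
  have hz : ∀ k, e k = 0 := by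
    intro k
    by_contra hk
    obtain ⟨x, hx⟩ := hcoord k
    have hx0 : x ≠ 0 := by rintro rfl; exact hk (by simpa using hx)
    have h1 := two_le_b hx0
    have h2 : b (e k) (e k) = 9 * b x x := by
      rw [hx, b_smul_left, b_smul_right]; ring
    have hs := h.sum_sq (e k)
    have h3 : b (e k) (e k) ^ 2 ≤ ∑ j, b (e j) (e k) ^ 2 :=
      Finset.single_le_sum (f := fun j => b (e j) (e k) ^ 2) (fun j _ => sq_nonneg _)
        (Finset.mem_univ k)
    rw [hs] at h3
    nlinarith
  have ht := h.trace
  simp [hz, b] at ht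

/-- No tight frame of 64 pairwise congruent vectors modulo 2 outside `2E₈`, with constant 36. -/
lemma Tight.false_odd (h : Tight 36 e) (hcard : Fintype.card κ = 64)
    (hpar : ∀ k k', ∃ f, e k = e k' + (2 : ℤ) • f) (hne : ∀ k, e k ≠ 0) : False := by
  -- The average norm is 4.5, so some member has norm 2 or 4.
  obtain ⟨k₀, hk₀⟩ : ∃ k, b (e k) (e k) < 6 := by
    by_contra! hcon
    have : ∑ k : κ, (6 : ℤ) ≤ ∑ k, b (e k) (e k) := Finset.sum_le_sum fun k _ => hcon k
    rw [h.trace] at this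
    simp [hcard] at this
  have h1 := two_le_b (hne k₀)
  have h2 := b_even (e k₀)
  have hs := h.sum_sq (e k₀)
  choose f hf using fun k => hpar k k₀
  set v := e k₀ with hv
  have hb1 : ∀ k, b (e k) v = b v v + 2 * b (f k) v := by
    intro k; rw [hf k, b_add_left, b_smul_left]
  have hb2 : ∀ k, b (e k) (e k) = b v v + 4 * b (f k) v + 4 * b (f k) (f k) := by
    intro k
    rw [hf k]
    simp only [b_add_left, b_add_right, b_smul_left, b_smul_right]
    rw [b_symm v (f k)]; ring
  have h3 : b v v = 2 ∨ b v v = 4 := by omega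
  rcases h3 with h3 | h3
  · -- `v` is a root: `N(e) ≥ 6 - b(e, v)²` for every member of the frame.
    have key : ∀ k, 6 ≤ b (e k) (e k) + b (e k) v ^ 2 := by
      intro k
      have e1 := hb1 k
      have e2 := hb2 k
      rw [h3] at e1 e2
      have e3 := two_le_b (hne k)
      by_cases h0 : b (e k) v = 0
      · have hfk : f k ≠ 0 := by
          intro hz
          rw [hz] at e1
          simp [b] at e1
          simp [b, e1] at h0
        have := two_le_b hfk
        rw [h0]; omega
      · have : 2 ≤ b (e k) v ∨ b (e k) v ≤ -2 := by omega
        have : 4 ≤ b (e k) v ^ 2 := by rcases this with h' | h' <;> nlinarith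
        linarith
    have : ∑ k : κ, (6 : ℤ) ≤ ∑ k, (b (e k) (e k) + b (e k) v ^ 2) :=
      Finset.sum_le_sum fun k _ => key k
    rw [Finset.sum_add_distrib, h.trace, hs, h3] at this
    simp [hcard] at this
  · -- `v` has norm 4: with `c = b(e, v) / 2`, a weighted count shows that the word of `v`
    -- has weight at most 15.
    have := h.le_sum (v := v) (k₀ := k₀) (by rw [← hv, h3]; norm_num)
      (f := fun k => (2 + b (f k) v) ^ 2 + 3 * (b (f k) v + b (f k) (f k))) (c := 4)
      (by norm_num)
    have hnn : ∀ k, 0 ≤ b (f k) v + b (f k) (f k) := by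
      intro k
      have := two_le_b (hne k)
      have := hb2 k
      omega
    have hsum : ∑ k, ((2 + b (f k) v) ^ 2 + 3 * (b (f k) v + b (f k) (f k))) = 60 := by
      have e1 : 4 * ∑ k, ((2 + b (f k) v) ^ 2 + 3 * (b (f k) v + b (f k) (f k)))
          = ∑ k, b (e k) v ^ 2 + 3 * ∑ k, b (e k) (e k) - ∑ k : κ, 12 := by
        rw [Finset.mul_sum, Finset.mul_sum, ← Finset.sum_add_distrib, ← Finset.sum_sub_distrib]
        refine Finset.sum_congr rfl fun k _ => ?_
        rw [hb1 k, hb2 k, h3]; ring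
      rw [hs, h.trace, h3] at e1
      simp [hcard] at e1
      linarith
    have h5 := this (fun k => by have := hnn k; positivity) (fun k hk => by
      rw [hb1 k, h3] at hk
      have e1 := hnn k
      have e2 := b_even (f k)
      by_cases hodd : (2 : ℤ) ∣ b (f k) v
      · have hne : 2 + b (f k) v ≠ 0 := by
          intro h0
          exact hk ⟨0, by linarith⟩
        have : 2 ≤ 2 + b (f k) v ∨ 2 + b (f k) v ≤ -2 := by omega
        have : 4 ≤ (2 + b (f k) v) ^ 2 := by rcases this with h' | h' <;> nlinarith
        linarith
      · have : 1 ≤ b (f k) v + b (f k) (f k) := by omega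
        have hne : 2 + b (f k) v ≠ 0 := by omega
        have : 1 ≤ (2 + b (f k) v) ^ 2 := by
          have := sq_nonneg (2 + b (f k) v)
          have : (2 + b (f k) v) ^ 2 ≠ 0 := by positivity
          omega
        linarith)
    rw [hsum] at h5
    norm_num at h5

end Frame

/-! ### An exhaustive search over signed subsets -/

/-- The bit position of a point of `P¹(F₃₁)`. -/
def pos : P1 → ℕ
  | none => 31
  | some i => i.val

/-- The set of rows in which column `i` of `H` is `+1`, as a bit mask. -/
def mask (i : P1) : ℕ :=
  ((List.range 31).foldl
    (fun m j => if H (some (Nat.cast j)) i = 1 then m + 2 ^ j else m) 0) +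
    if H none i = 1 then 2 ^ 31 else 0

/-- All 32 bits set. -/
def full : ℕ := 4294967295

/-- Update of the four masks for the rows that so far have no (`a0`) or at most one (`a1`)
entry `-1`, and no (`b0`) or at most one (`b1`) entry `+1`, when the column with `+1` positions
`m` is appended; the result is passed on to `F`. -/
def push (F : ℕ → ℕ → ℕ → ℕ → Bool) (m a0 a1 b0 b1 : ℕ) : Bool :=
  F (Nat.land a0 m) (Nat.lor (Nat.land a1 m) a0)
    (Nat.land b0 (Nat.xor m full)) (Nat.lor (Nat.land b1 (Nat.xor m full)) b0)

/-- Tests `leaf` on the masks of all `k`-element subsets of a list of columns. It is written with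
recursors and bare `Nat` operations to keep its evaluation in the kernel cheap. -/
def search (leaf : ℕ → ℕ → ℕ → ℕ → Bool) (l : List ℕ) : ℕ → ℕ → ℕ → ℕ → ℕ → Bool :=
  List.rec
    (fun k a0 a1 b0 b1 => Nat.casesOn k (leaf a0 a1 b0 b1) fun _ => true)
    (fun m _ F k a0 a1 b0 b1 => Nat.casesOn k (leaf a0 a1 b0 b1) fun k' =>
      and (push (F k') m a0 a1 b0 b1) (F (Nat.succ k') a0 a1 b0 b1)) l

/-- Population count of the lowest `n` bits. -/
def popAux (n : ℕ) : ℕ → ℕ :=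
  Nat.rec (fun _ => 0) (fun _ F m => Nat.add (Nat.mod m 2) (F (Nat.div m 2))) n

/-- Population count of the lowest 32 bits. -/
def pop (m : ℕ) : ℕ := popAux 32 m

/-- Columns in which row `0` of `H` is `+1`. -/
def cols : List P1 :=
  [some 0, some 3, some 6, some 11, some 12, some 13, some 15, some 17, some 21, some 22,
    some 23, some 24, some 26, some 27, some 29, some 30]

lemma search4 : search (fun a0 _ b0 _ => Nat.ble (pop (Nat.lor a0 b0)) 6) (cols.map mask) 4
    full full full full = true := by decide +kernel

lemma search6 : search (fun a0 a1 b0 b1 =>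
      Nat.ble (Nat.add (pop (Nat.lor a1 b1)) (Nat.mul 2 (pop (Nat.lor a0 b0)))) 12)
    (cols.map mask) 6 full full full full = true := by decide +kernel

lemma search7 : (cols.all fun i => i == some 30 ||
    push (push (search (fun _ a1 _ b1 => Nat.blt 0 (Nat.mod (Nat.lor a1 b1) 4294967296))
      ((cols.filter fun j => j != some 30 && j != i).map mask) 5) (mask i ^^^ full))
      (mask (some 30) ^^^ full) full full full full) = true := by decide +kernel

/-- The four masks `a0 a1 b0 b1` record, for each row, whether the number `d` of entries `-1` and
the number `c` of entries `+1` are `0`, resp. at most `1`. -/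
def Valid (a0 a1 b0 b1 : ℕ) (c d : P1 → ℕ) : Prop :=
  ∀ j, (a0.testBit (pos j) = true ↔ d j = 0) ∧ (a1.testBit (pos j) = true ↔ d j ≤ 1) ∧
    (b0.testBit (pos j) = true ↔ c j = 0) ∧ (b1.testBit (pos j) = true ↔ c j ≤ 1)

lemma testBit_full : ∀ j, full.testBit (pos j) = true := by decide +kernel

lemma testBit_mask : ∀ i j, (mask i).testBit (pos j) = decide (H j i = 1) := by decide +kernel

lemma testBit_land (a c n : ℕ) : (Nat.land a c).testBit n = (a.testBit n && c.testBit n) :=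
  Nat.testBit_and a c n

lemma testBit_lor (a c n : ℕ) : (Nat.lor a c).testBit n = (a.testBit n || c.testBit n) :=
  Nat.testBit_or a c n

lemma testBit_xor (a c n : ℕ) : (Nat.xor a c).testBit n = (a.testBit n ^^ c.testBit n) :=
  Nat.testBit_xor a c n

lemma push_sound {F : ℕ → ℕ → ℕ → ℕ → Bool} {m a0 a1 b0 b1 : ℕ} {c d : P1 → ℕ}
    (q : P1 → Bool) (hm : ∀ j, m.testBit (pos j) = q j) (hV : Valid a0 a1 b0 b1 c d)
    (h : push F m a0 a1 b0 b1 = true) :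
    ∃ a0' a1' b0' b1', F a0' a1' b0' b1' = true ∧
      Valid a0' a1' b0' b1' (fun j => c j + if q j then 1 else 0)
        (fun j => d j + if q j then 0 else 1) := by
  refine ⟨_, _, _, _, h, fun j => ?_⟩
  obtain ⟨h1, h2, h3, h4⟩ := hV j
  simp only [testBit_land, testBit_lor, testBit_xor, testBit_full, hm, Bool.and_eq_true,
    Bool.or_eq_true, h1, h2, h3, h4]
  cases q j <;> simp <;> omega

lemma valid_full : Valid full full full full (fun _ => 0) (fun _ => 0) := by
  intro j
  simp [testBit_full]

lemma search_zero (leaf : ℕ → ℕ → ℕ → ℕ → Bool) (l : List ℕ) (a0 a1 b0 b1 : ℕ) :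
    search leaf l 0 a0 a1 b0 b1 = leaf a0 a1 b0 b1 := by
  cases l <;> rfl

lemma search_cons (leaf : ℕ → ℕ → ℕ → ℕ → Bool) (m : ℕ) (l : List ℕ) (k a0 a1 b0 b1 : ℕ) :
    search leaf (m :: l) (k + 1) a0 a1 b0 b1 =
      (push (search leaf l k) m a0 a1 b0 b1 && search leaf l (k + 1) a0 a1 b0 b1) := rfl

/-- The number of columns in `t` in which row `j` is `+1`. -/
def plus (t : List P1) (j : P1) : ℕ := t.countP fun i => decide (H j i = 1)

/-- The number of columns in `t` in which row `j` is `-1`. -/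
def minus (t : List P1) (j : P1) : ℕ := t.countP fun i => decide (H j i ≠ 1)

/-- A successful search reaches the leaf belonging to each `k`-element sublist. -/
lemma search_sound {leaf : ℕ → ℕ → ℕ → ℕ → Bool} {L t : List P1} (ht : t.Sublist L) :
    ∀ {a0 a1 b0 b1 : ℕ} {c d : P1 → ℕ}, Valid a0 a1 b0 b1 c d →
      search leaf (L.map mask) t.length a0 a1 b0 b1 = true →
      ∃ a0' a1' b0' b1', leaf a0' a1' b0' b1' = true ∧
        Valid a0' a1' b0' b1' (fun j => c j + plus t j) (fun j => d j + minus t j) := by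
  induction ht with
  | slnil =>
    intro a0 a1 b0 b1 c d hV h
    exact ⟨_, _, _, _, h, by simpa [plus, minus] using hV⟩
  | @cons t l x ht ih =>
    intro a0 a1 b0 b1 c d hV h
    rcases t with _ | ⟨y, t⟩
    · rw [List.length_nil, search_zero] at h
      exact ⟨_, _, _, _, h, by simpa [plus, minus] using hV⟩
    · rw [List.map_cons, List.length_cons, search_cons, Bool.and_eq_true] at h
      exact ih hV h.2
  | @cons_cons t l x ht ih =>
    intro a0 a1 b0 b1 c d hV h
    rw [List.map_cons, List.length_cons, search_cons, Bool.and_eq_true] at h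
    obtain ⟨_, _, _, _, hF, hV'⟩ := push_sound _ (testBit_mask x) hV h.1
    obtain ⟨a0', a1', b0', b1', hl, hV''⟩ := ih hV' hF
    refine ⟨a0', a1', b0', b1', hl, ?_⟩
    convert hV'' using 2 with j j
    · simp [plus, List.countP_cons]; ring
    · by_cases hq : H j x = 1 <;> simp [minus, hq]; ring

lemma popAux_eq (n m : ℕ) :
    popAux n m = ∑ i ∈ Finset.range n, if m.testBit i = true then 1 else 0 := by
  induction n generalizing m with
  | zero => rfl
  | succ n ih =>
    have h1 : popAux (n + 1) m = m % 2 + popAux n (m / 2) := rfl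
    rw [h1, ih, Finset.sum_range_succ', add_comm]
    simp only [Nat.testBit_add_one, Nat.testBit_zero]
    rcases Nat.mod_two_eq_zero_or_one m with h | h <;> simp [h]

lemma pos_injective : Function.Injective pos := by
  unfold Function.Injective
  decide +kernel

lemma image_pos : Finset.univ.image pos = Finset.range 32 := by decide +kernel

lemma pop_eq (m : ℕ) : pop m = (Finset.univ.filter fun j => m.testBit (pos j) = true).card := by
  rw [pop, popAux_eq, ← image_pos, Finset.sum_image fun _ _ _ _ h => pos_injective h,
    Finset.card_filter]

lemma search4_sound {t : List P1} (ht : t.Sublist cols) (hl : t.length = 4) :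
    (Finset.univ.filter fun j => minus t j = 0 ∨ plus t j = 0).card ≤ 6 := by
  have h4 := search4
  rw [← hl] at h4
  obtain ⟨a0, a1, b0, b1, h, hV⟩ := search_sound ht valid_full h4
  have h := Nat.le_of_ble_eq_true h
  rw [pop_eq] at h
  refine le_of_eq_of_le (congrArg Finset.card (Finset.filter_congr fun j _ => ?_)) h
  obtain ⟨h1, -, h3, -⟩ := hV j
  simp only [testBit_lor, Bool.or_eq_true, h1, h3, zero_add]

lemma search6_sound {t : List P1} (ht : t.Sublist cols) (hl : t.length = 6) :
    (Finset.univ.filter fun j => minus t j ≤ 1 ∨ plus t j ≤ 1).card +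
      2 * (Finset.univ.filter fun j => minus t j = 0 ∨ plus t j = 0).card ≤ 12 := by
  have h6 := search6
  rw [← hl] at h6
  obtain ⟨a0, a1, b0, b1, h, hV⟩ := search_sound ht valid_full h6
  have h : pop (Nat.lor a1 b1) + 2 * pop (Nat.lor a0 b0) ≤ 12 := Nat.le_of_ble_eq_true h
  rw [pop_eq, pop_eq] at h
  refine le_of_eq_of_le (congrArg₂ (fun x y : Finset P1 => x.card + 2 * y.card)
    (Finset.filter_congr fun j _ => ?_) (Finset.filter_congr fun j _ => ?_)) h
  all_goals
    obtain ⟨h1, h2, h3, h4⟩ := hV j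
    simp only [testBit_lor, Bool.or_eq_true, h1, h2, h3, h4, zero_add]

lemma exists_testBit {m : ℕ} (h : 0 < m % 4294967296) : ∃ j, m.testBit (pos j) = true := by
  obtain ⟨i, hi⟩ := Nat.exists_testBit_of_ne_zero h.ne'
  rw [show (4294967296 : ℕ) = 2 ^ 32 by norm_num, Nat.testBit_mod_two_pow, Bool.and_eq_true,
    decide_eq_true_eq, ← Finset.mem_range, ← image_pos, Finset.mem_image] at hi
  obtain ⟨⟨j, -, rfl⟩, hj⟩ := hi
  exact ⟨j, hj⟩

/-- In the case of weight 7, the columns `30` and `i` carry the coefficient `-1`. -/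
lemma search7_sound {t : List P1} {i : P1} (hi : i ∈ cols) (hi30 : i ≠ some 30)
    (ht : t.Sublist (cols.filter fun j => j != some 30 && j != i)) (hl : t.length = 5) :
    ∃ j, minus t j + (if H j (some 30) = 1 then 1 else 0) + (if H j i = 1 then 1 else 0) ≤ 1 ∨
      plus t j + (if H j (some 30) = 1 then 0 else 1) + (if H j i = 1 then 0 else 1) ≤ 1 := by
  have h7 := List.all_eq_true.1 search7 i hi
  rw [Bool.or_eq_true] at h7
  have h7 := h7.resolve_left (by simpa using hi30)
  have hx (x : P1) (j : P1) : (mask x ^^^ full).testBit (pos j) = !decide (H j x = 1) := by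
    rw [Nat.testBit_xor, testBit_mask, testBit_full, Bool.xor_true]
  obtain ⟨_, _, _, _, h7, hV⟩ := push_sound _ (hx _) valid_full h7
  obtain ⟨_, _, _, _, h7, hV⟩ := push_sound _ (hx _) hV h7
  rw [← hl] at h7
  obtain ⟨a0, a1, b0, b1, h, hV⟩ := search_sound ht hV h7
  have h : 0 < (Nat.lor a1 b1) % 4294967296 := by
    rw [Nat.blt] at h
    exact Nat.le_of_ble_eq_true h
  obtain ⟨j, hj⟩ := exists_testBit h
  refine ⟨j, ?_⟩
  obtain ⟨-, h2, -, h4⟩ := hV j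
  rw [testBit_lor, Bool.or_eq_true, h2, h4] at hj
  by_cases h30 : H j (some 30) = 1 <;> by_cases hji : H j i = 1 <;> simp [h30, hji] at hj ⊢ <;>
    omega

/-! ### Signed automorphisms of `H` -/

/-- The monomial map with permutation `π` and signs `ε` preserves `H`. -/
structure IsAut (π : Equiv.Perm P1) (ε : P1 → ℤ) : Prop where
  sign : ∀ i, ε i = 1 ∨ ε i = -1
  map : ∀ i j, H (π i) (π j) = ε i * ε j * H i j

lemma IsAut.comp {π ρ : Equiv.Perm P1} {ε η : P1 → ℤ} (h : IsAut π ε) (h' : IsAut ρ η) :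
    IsAut (ρ.trans π) (fun i => ε (ρ i) * η i) where
  sign i := by
    rcases h.sign (ρ i) with h1 | h1 <;> rcases h'.sign i with h2 | h2 <;> simp [h1, h2]
  map i j := by
    simp only [Equiv.trans_apply, h.map, h'.map]
    ring

/-- The translation `x ↦ x + c` of the projective line. -/
def transl (c : ZMod 31) : Equiv.Perm P1 := Equiv.optionCongr (Equiv.addRight c)

lemma isAut_transl (c : ZMod 31) : IsAut (transl c) (fun _ => 1) where
  sign _ := Or.inl rfl
  map i j := by
    rcases i with _ | i <;> rcases j with _ | j <;>
      simp [transl, H, S, add_sub_add_right_eq_sub]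

/-- The inversion `x ↦ -1/x`, with the inverse of `x` written as `x ^ 29`. -/
def invFun : P1 → P1
  | none => some 0
  | some x => if x = 0 then none else some (-x ^ 29)

lemma invFun_involutive : Function.Involutive invFun := by
  unfold Function.Involutive
  decide +kernel

/-- The signs that turn the inversion into an automorphism of `H`. -/
def invSign : P1 → ℤ
  | none => 1
  | some x => if x = 0 then -1 else chi x

lemma isAut_inv : IsAut invFun_involutive.toPerm invSign where
  sign := by decide +kernel
  map := by
    simp only [Function.Involutive.coe_toPerm]
    decide +kernel

/-- Multiplication by a unit of `F₃₁`. -/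
def scale (a : (ZMod 31)ˣ) : Equiv.Perm P1 := Equiv.optionCongr (Units.mulLeft a)

lemma chi_mul : ∀ a x : ZMod 31, isRes a = true → chi (a * x) = chi x := by decide +kernel

lemma isAut_scale (a : (ZMod 31)ˣ) (ha : isRes a = true) : IsAut (scale a) (fun _ => 1) where
  sign _ := Or.inl rfl
  map i j := by
    rcases i with _ | i <;> rcases j with _ | j <;>
      simp [scale, H, S, ← mul_sub, chi_mul _ _ ha]

lemma exists_aut {j₁ j₂ : P1} (h : j₁ ≠ j₂) :
    ∃ π ε, IsAut π ε ∧ π none = j₁ ∧ π (some 0) = j₂ := by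
  rcases j₁ with _ | c
  · rcases j₂ with _ | d
    · exact absurd rfl h
    · exact ⟨_, _, isAut_transl d, rfl, by simp [transl]⟩
  · obtain ⟨d, hd⟩ : ∃ d : ZMod 31, transl c (invFun (some d)) = j₂ := by
      rcases j₂ with _ | e
      · exact ⟨0, by simp [transl, invFun]⟩
      · have hec : e - c ≠ 0 := sub_ne_zero.2 fun h' => h (by rw [h'])
        have key : ∀ x : ZMod 31, x ≠ 0 → ∃ d, invFun (some d) = some x := by decide +kernel
        obtain ⟨d, hd⟩ := key _ hec
        exact ⟨d, by simp [hd, transl]⟩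
    refine ⟨_, _, (isAut_transl c).comp (isAut_inv.comp (isAut_transl d)), ?_, ?_⟩
    · simp [transl, invFun]
    · rw [← hd]
      simp [transl]

/-! ### Minimum weight of the ternary code `[I | H]` -/

lemma H_sq : ∀ i j, H i j * H i j = 1 := by decide +kernel

lemma H_pm (i j : P1) : H i j = 1 ∨ H i j = -1 := mul_self_eq_one_iff.1 (H_sq i j)

lemma H_gram : ∀ i i', ∑ j, H j i * H j i' = if i = i' then 32 else 0 := by decide +kernel

/-- The coordinate `j` of `H u`. -/
def sig (u : P1 → ℤ) (j : P1) : ℤ := ∑ i, H j i * u i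

/-- A ternary word `u` of weight `w`, lifted to `{-1, 0, 1}`, for which the codeword
`(H u, u)` has weight at most 15. -/
structure Bad (w : ℕ) (u : P1 → ℤ) : Prop where
  trit : ∀ i, u i = -1 ∨ u i = 0 ∨ u i = 1
  supp : (Finset.univ.filter fun i => u i ≠ 0).card = w
  few : (Finset.univ.filter fun j => ¬ (3 : ℤ) ∣ sig u j).card + w ≤ 15

lemma sig_map {π : Equiv.Perm P1} {ε : P1 → ℤ} (h : IsAut π ε) (s : ℤ) (u : P1 → ℤ) (j : P1) :
    sig (fun i => s * ε i * u (π i)) j = s * ε j * sig u (π j) := by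
  rw [sig, sig, ← Equiv.sum_comp π (fun i => H (π j) i * u i), Finset.mul_sum]
  refine Finset.sum_congr rfl fun i _ => ?_
  rw [h.map]
  rcases h.sign j with h1 | h1 <;> rw [h1] <;> ring

lemma Bad.map {w : ℕ} {u : P1 → ℤ} (hu : Bad w u) {π : Equiv.Perm P1} {ε : P1 → ℤ}
    (h : IsAut π ε) {s : ℤ} (hs : s = 1 ∨ s = -1) : Bad w (fun i => s * ε i * u (π i)) where
  trit i := by
    rcases hs with rfl | rfl <;> rcases h.sign i with h1 | h1 <;>
      rcases hu.trit (π i) with h2 | h2 | h2 <;> simp [h1, h2]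
  supp := by
    rw [← hu.supp]
    refine Finset.card_equiv π fun i => ?_
    rcases hs with rfl | rfl <;> rcases h.sign i with h1 | h1 <;> simp [h1]
  few := by
    refine le_of_eq_of_le (congrArg (· + w) ?_) hu.few
    refine Finset.card_equiv π fun i => ?_
    simp only [sig_map h, Finset.mem_filter, Finset.mem_univ, true_and]
    rcases hs with rfl | rfl <;> rcases h.sign i with h1 | h1 <;> simp [h1]

namespace Bad

variable {w : ℕ} {u : P1 → ℤ}

lemma sum_sq (hu : Bad w u) : ∑ i, u i ^ 2 = w := by
  rw [← hu.supp, Finset.card_filter, Nat.cast_sum]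
  refine Finset.sum_congr rfl fun i _ => ?_
  rcases hu.trit i with h | h | h <;> simp [h]

lemma sum_sig_sq (hu : Bad w u) : ∑ j, sig u j ^ 2 = 32 * w := by
  have : ∀ j, sig u j ^ 2 = ∑ i, ∑ i', u i * u i' * (H j i * H j i') := fun j => by
    rw [sq, sig, Finset.sum_mul_sum]
    exact Finset.sum_congr rfl fun i _ => Finset.sum_congr rfl fun i' _ => by ring
  simp only [this]
  rw [Finset.sum_comm, ← hu.sum_sq, Finset.mul_sum]
  refine Finset.sum_congr rfl fun i _ => ?_
  rw [Finset.sum_comm]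
  simp only [← Finset.mul_sum, H_gram, mul_ite, mul_zero, Finset.sum_ite_eq, Finset.mem_univ,
    if_true]
  ring

lemma sig_parity (hu : Bad w u) (j : P1) : (2 : ℤ) ∣ sig u j - w := by
  rw [← hu.sum_sq, sig, ← Finset.sum_sub_distrib]
  refine Finset.dvd_sum fun i _ => ?_
  rcases hu.trit i with h | h | h <;> rcases H_pm j i with h' | h' <;> simp [h, h']

lemma sub_nonneg (hu : Bad w u) {s : ℤ} (hs : s = 1 ∨ s = -1) (j i : P1) :
    0 ≤ u i ^ 2 - s * (H j i * u i) := by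
  rcases hs with rfl | rfl <;> rcases hu.trit i with h | h | h <;>
    rcases H_pm j i with h' | h' <;> simp [h, h']

lemma sum_sub (hu : Bad w u) (s : ℤ) (j : P1) :
    ∑ i, (u i ^ 2 - s * (H j i * u i)) = w - s * sig u j := by
  rw [Finset.sum_sub_distrib, hu.sum_sq, ← Finset.mul_sum, sig]

lemma sig_le (hu : Bad w u) {s : ℤ} (hs : s = 1 ∨ s = -1) (j : P1) : s * sig u j ≤ w := by
  have := Finset.sum_nonneg fun i (_ : i ∈ Finset.univ) => hu.sub_nonneg hs j i
  rw [hu.sum_sub] at this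
  linarith

lemma eq_of_sig_eq (hu : Bad w u) {s : ℤ} (hs : s = 1 ∨ s = -1) {j : P1} (h : s * sig u j = w)
    (i : P1) : s * (H j i * u i) = u i ^ 2 := by
  have h0 : ∑ i, (u i ^ 2 - s * (H j i * u i)) = 0 := by rw [hu.sum_sub, h, sub_self]
  rw [Finset.sum_eq_zero_iff_of_nonneg fun i _ => hu.sub_nonneg hs j i] at h0
  linarith [h0 i (Finset.mem_univ i)]

/-- The possible values of a coordinate of `H u`. -/
lemma sig_cases (hu : Bad w u) (j : P1) :
    (2 : ℤ) ∣ sig u j - w ∧ -(w : ℤ) ≤ sig u j ∧ sig u j ≤ w := by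
  refine ⟨hu.sig_parity j, ?_, ?_⟩
  · linarith [hu.sig_le (Or.inr rfl) j]
  · linarith [hu.sig_le (Or.inl rfl) j]

end Bad

namespace Bad

variable {w : ℕ} {u : P1 → ℤ}

/-- The number of nonzero coordinates of `H u` modulo 3, as a sum of integers. -/
lemma few_sum (hu : Bad w u) : (∑ j, if (3 : ℤ) ∣ sig u j then (0 : ℤ) else 1) + w ≤ 15 := by
  have h := hu.few
  rw [Finset.card_filter] at h
  zify at h
  refine le_of_eq_of_le (congrArg (· + (w : ℤ)) (Finset.sum_congr rfl fun j _ => ?_)) h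
  split_ifs <;> simp_all

/-- If the weight is odd, so are the coordinates of `H u`, and those divisible by 3 have square at
least 9. -/
lemma odd_nonneg (hu : Bad w u) (hw : w % 2 = 1) (hw7 : w ≤ 7) (j : P1) :
    0 ≤ 8 * (if (3 : ℤ) ∣ sig u j then (0 : ℤ) else 1) + (sig u j ^ 2 - 9) := by
  obtain ⟨h1, h2, h3⟩ := hu.sig_cases j
  generalize sig u j = x at *
  have h4 : -7 ≤ x := by omega
  have h5 : x ≤ 7 := by omega
  interval_cases x <;> omega

lemma sum_odd (hu : Bad w u) :
    ∑ j, (8 * (if (3 : ℤ) ∣ sig u j then (0 : ℤ) else 1) + (sig u j ^ 2 - 9)) ≤ 24 * (w : ℤ) - 168 := by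
  rw [Finset.sum_add_distrib, Finset.sum_sub_distrib, ← Finset.mul_sum, hu.sum_sig_sq]
  have hc : ∑ _j : P1, (9 : ℤ) = 288 := by simp
  rw [hc]
  linarith [hu.few_sum]

lemma odd_eq_seven (hu : Bad w u) (hw : w % 2 = 1) (hw7 : w ≤ 7) : w = 7 := by
  have h1 := Finset.sum_nonneg fun j (_ : j ∈ Finset.univ) => hu.odd_nonneg hw hw7 j
  have h2 := hu.sum_odd
  omega

/-- In weight 7 all coordinates of `H u` are `±1` or `±3`. -/
lemma sq_seven (hu : Bad 7 u) (j : P1) : sig u j ^ 2 = 1 ∨ sig u j ^ 2 = 9 := by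
  have h1 := Finset.sum_nonneg fun j (_ : j ∈ Finset.univ) => hu.odd_nonneg rfl le_rfl j
  have h2 := hu.sum_odd
  have h3 := (Finset.sum_eq_zero_iff_of_nonneg fun j _ => hu.odd_nonneg rfl le_rfl j).1
    (le_antisymm (by simpa using h2) h1) j (Finset.mem_univ j)
  split_ifs at h3
  · right; linarith
  · left; linarith

lemma card_nine (hu : Bad 7 u) : 24 ≤ (Finset.univ.filter fun j => sig u j ^ 2 = 9).card := by
  have h : ∑ j, sig u j ^ 2 = ∑ j, (1 + 8 * if sig u j ^ 2 = 9 then (1 : ℤ) else 0) := by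
    refine Finset.sum_congr rfl fun j _ => ?_
    rcases hu.sq_seven j with h | h <;> rw [h] <;> norm_num
  rw [hu.sum_sig_sq, Finset.sum_add_distrib, ← Finset.mul_sum, Finset.sum_boole] at h
  simp at h
  omega

/-- The number of coordinates of `H u` whose square is `k`. -/
abbrev cnt (u : P1 → ℤ) (k : ℤ) : ℕ := (Finset.univ.filter fun j => sig u j ^ 2 = k).card

lemma cnt_cast (k : ℤ) : (cnt u k : ℤ) = ∑ j, if sig u j ^ 2 = k then (1 : ℤ) else 0 := by
  rw [Finset.sum_boole]

/-- In even weight at most 6, few nonzero coordinates modulo 3 force many coordinates `±4` and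
`±6`: otherwise the total `∑ (H u)ⱼ² = 32 w` cannot be reached. -/
lemma even_le (hu : Bad w u) (hw : w % 2 = 0) (hw6 : w ≤ 6) :
    33 * w ≤ 3 * cnt u 16 + 9 * cnt u 36 + (15 + 24 * w) := by
  have h : ∀ j, 4 * (if (3 : ℤ) ∣ sig u j then (0 : ℤ) else 1) = sig u j ^ 2
      - 12 * (if sig u j ^ 2 = 16 then (1 : ℤ) else 0)
      - 36 * (if sig u j ^ 2 = 36 then (1 : ℤ) else 0) := fun j => by
    obtain ⟨h1, h2, h3⟩ := hu.sig_cases j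
    generalize sig u j = x at *
    have h4 : -6 ≤ x := by omega
    have h5 : x ≤ 6 := by omega
    interval_cases x <;> omega
  have h := Finset.sum_congr (Eq.refl (Finset.univ : Finset P1)) fun j _ => h j
  rw [Finset.sum_sub_distrib, Finset.sum_sub_distrib, ← Finset.mul_sum, ← Finset.mul_sum,
    ← Finset.mul_sum, ← cnt_cast, ← cnt_cast, hu.sum_sig_sq] at h
  have := hu.few_sum
  omega

lemma cnt_eq_zero (hu : Bad w u) {k : ℤ} (hk : (w : ℤ) ^ 2 < k) : cnt u k = 0 := by
  rw [Finset.card_eq_zero, Finset.filter_eq_empty_iff]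
  rintro j - rfl
  obtain ⟨-, h2, h3⟩ := hu.sig_cases j
  nlinarith

lemma cnt_sum_le (hu : Bad w u) : 16 * cnt u 16 + 36 * cnt u 36 ≤ 32 * w := by
  have h : 16 * (cnt u 16 : ℤ) + 36 * cnt u 36 ≤ 32 * w := by
    rw [← hu.sum_sig_sq, cnt_cast, cnt_cast, Finset.mul_sum, Finset.mul_sum,
      ← Finset.sum_add_distrib]
    refine Finset.sum_le_sum fun j _ => ?_
    split_ifs with h1 h2 h2
    · omega
    · omega
    · omega
    · simpa using sq_nonneg (sig u j)
  exact_mod_cast h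

/-- Two rows of `H` that agree, up to signs, on the support of `u` can be moved to the places
`∞` and `0`; after adjusting signs, the support of the new word `u'` lies in `cols` because row `∞`
of `H` is constant. The order of the two rows has to be chosen suitably, so the conclusion only
retains a property `p` common to both of them. -/
lemma normalize (hu : Bad w u) (p : P1 → ℤ → Prop) {j₁ j₂ : P1} {s₁ s₂ : ℤ} (hj : j₁ ≠ j₂)
    (hs₁ : s₁ = 1 ∨ s₁ = -1) (hs₂ : s₂ = 1 ∨ s₂ = -1)
    (hp₁ : p j₁ s₁) (hp₂ : p j₂ s₂) (heq : ∀ i, s₁ * (H j₁ i * u i) = s₂ * (H j₂ i * u i)) :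
    ∃ j s, p j s ∧ ∃ (π : Equiv.Perm P1) (u' : P1 → ℤ), Bad w u' ∧
      (∀ i, u' i = s * (H j (π i) * u (π i))) ∧ ∀ i, H (some 0) i * u' i = u' i := by
  have key : ∀ {j₁ j₂ : P1} {s₁ s₂ : ℤ}, j₁ ≠ j₂ → (s₁ = 1 ∨ s₁ = -1) → (s₂ = 1 ∨ s₂ = -1) →
      (∀ i, s₁ * (H j₁ i * u i) = s₂ * (H j₂ i * u i)) → H j₁ j₂ = s₁ * s₂ →
      ∃ (π : Equiv.Perm P1) (u' : P1 → ℤ), Bad w u' ∧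
        (∀ i, u' i = s₁ * (H j₁ (π i) * u (π i))) ∧ ∀ i, H (some 0) i * u' i = u' i := by
    intro j₁ j₂ s₁ s₂ hj hs₁ hs₂ heq hH
    obtain ⟨π, ε, hπ, rfl, rfl⟩ := exists_aut hj
    have hs : ε none * s₁ = 1 ∨ ε none * s₁ = -1 := by
      rcases hs₁ with rfl | rfl <;> rcases hπ.sign none with h | h <;> simp [h]
    have hN : ∀ i, H none i = 1 := by decide
    have hu' : ∀ i, ε none * s₁ * ε i * u (π i) = s₁ * (H (π none) (π i) * u (π i)) := fun i => by
      rw [hπ.map, hN]; ring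
    refine ⟨π, _, hu.map hπ hs, hu', fun i => ?_⟩
    have h1 : ε none * ε (some 0) = s₁ * s₂ := by rw [← hH, hπ.map, hN, mul_one]
    have h2 := heq (π i)
    rw [← hu' i, hπ.map] at h2
    have h3 := hπ.sign none
    have h4 := hπ.sign (some 0)
    have h5 := hπ.sign i
    generalize H (some 0) i = x at *
    generalize u (π i) = y at *
    rcases h3 with h3 | h3 <;> rcases h4 with h4 | h4 <;> rcases h5 with h5 | h5 <;>
      rcases hs₁ with rfl | rfl <;> rcases hs₂ with rfl | rfl <;>
      simp [h3, h4, h5] at h1 h2 ⊢ <;> linarith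
  by_cases hH : H j₁ j₂ = s₁ * s₂
  · exact ⟨j₁, s₁, hp₁, key hj hs₁ hs₂ heq hH⟩
  · refine ⟨j₂, s₂, hp₂, key hj.symm hs₂ hs₁ (fun i => (heq i).symm) ?_⟩
    have h1 : ∀ j₁ j₂ : P1, j₁ ≠ j₂ → H j₂ j₁ = - H j₁ j₂ := by decide +kernel
    rw [h1 _ _ hj]
    rcases H_pm j₁ j₂ with h | h <;> rcases hs₁ with rfl | rfl <;> rcases hs₂ with rfl | rfl <;>
      simp [h] at hH ⊢

end Bad

/-! ### Reduction of the weights 4, 6 and 7 to the search -/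

lemma mem_cols : ∀ i, i ∈ cols ↔ H (some 0) i = 1 := by decide +kernel

lemma nodup_cols : cols.Nodup := by decide +kernel

/-- The sum of the columns in `t` has the entry `plus t j - minus t j` in row `j`. -/
lemma sum_cols {t : List P1} (ht : t.Nodup) (j : P1) :
    ∑ i ∈ t.toFinset, H j i = (plus t j : ℤ) - minus t j := by
  rw [List.sum_toFinset _ ht]
  clear ht
  induction t with
  | nil => rfl
  | cons x t ih =>
    rw [List.map_cons, List.sum_cons, ih]
    rcases H_pm j x with h | h <;> simp [plus, minus, h] <;> ring

lemma plus_add_minus (t : List P1) (j : P1) : plus t j + minus t j = t.length := by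
  rw [plus, minus, List.length_eq_countP_add_countP (fun i => decide (H j i = 1))]
  congr 2
  ext i
  simp

/-- A word with nonnegative entries on the columns `cols`, presented as a sublist. -/
lemma exists_sublist {w : ℕ} {u : P1 → ℤ} (hu : Bad w u) (h0 : ∀ i, H (some 0) i * u i = u i)
    (hnn : ∀ i, 0 ≤ u i) :
    ∃ t : List P1, t.Sublist cols ∧ t.length = w ∧
      ∀ j, sig u j = (plus t j : ℤ) - minus t j := by
  have hmem : (cols.filter fun i => u i ≠ 0).toFinset = Finset.univ.filter fun i => u i ≠ 0 := by
    ext i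
    simp only [List.mem_toFinset, List.mem_filter, decide_eq_true_eq, Finset.mem_filter,
      Finset.mem_univ, true_and, and_iff_right_iff_imp, mem_cols]
    exact fun h => mul_right_cancel₀ h ((h0 i).trans (one_mul _).symm)
  refine ⟨cols.filter fun i => u i ≠ 0, List.filter_sublist, ?_, fun j => ?_⟩
  · rw [← hu.supp, ← hmem, List.toFinset_card_of_nodup (nodup_cols.filter _)]
  · rw [← sum_cols (nodup_cols.filter _), hmem, Finset.sum_filter, sig]
    refine Finset.sum_congr rfl fun i _ => ?_
    have := hnn i
    rcases hu.trit i with h | h | h <;> simp [h] at this ⊢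

namespace Bad

variable {w : ℕ} {u : P1 → ℤ}

/-- Two coordinates of `H u` of maximal absolute value allow a reduction to the case of
nonnegative entries on the columns `cols`. -/
lemma exists_nonneg (hu : Bad w u) (hw : 2 ≤ cnt u (w ^ 2)) :
    ∃ t : List P1, t.Sublist cols ∧ t.length = w ∧ ∃ u', Bad w u' ∧
      ∀ j, sig u' j = (plus t j : ℤ) - minus t j := by
  obtain ⟨j₁, hj₁, j₂, hj₂, hj⟩ := Finset.one_lt_card.1 (show 1 < cnt u (w ^ 2) by omega)
  have hs : ∀ j ∈ Finset.univ.filter fun j => sig u j ^ 2 = (w : ℤ) ^ 2,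
      ∃ s : ℤ, (s = 1 ∨ s = -1) ∧ s * sig u j = w := fun j hj => by
    rcases sq_eq_sq_iff_eq_or_eq_neg.1 (Finset.mem_filter.1 hj).2 with h | h
    · exact ⟨1, Or.inl rfl, by rw [h]; ring⟩
    · exact ⟨-1, Or.inr rfl, by rw [h]; ring⟩
  obtain ⟨s₁, hs₁, h₁⟩ := hs j₁ hj₁
  obtain ⟨s₂, hs₂, h₂⟩ := hs j₂ hj₂
  have e₁ := hu.eq_of_sig_eq hs₁ h₁
  have e₂ := hu.eq_of_sig_eq hs₂ h₂
  obtain ⟨j, s, hp, π, u', hu', hdef, h0⟩ := hu.normalize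
    (fun j s => ∀ i, s * (H j i * u i) = u i ^ 2) hj hs₁ hs₂ e₁ e₂
    fun i => (e₁ i).trans (e₂ i).symm
  obtain ⟨t, ht, hl, hsig⟩ := exists_sublist hu' h0 fun i => by
    rw [hdef, hp]; exact sq_nonneg _
  exact ⟨t, ht, hl, u', hu', hsig⟩

lemma false_four (hu : Bad 4 u) : False := by
  have key : ∀ {u}, Bad 4 u → 7 ≤ cnt u 16 := fun {u} hu => by
    have h1 := hu.even_le rfl (by norm_num)
    have h2 := hu.cnt_eq_zero (k := 36) (by norm_num)
    omega
  obtain ⟨t, ht, hl, u', hu', hsig⟩ := hu.exists_nonneg (by have := key hu; norm_num; omega)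
  have h1 := search4_sound ht hl
  have h2 : cnt u' 16 ≤ _ := Finset.card_le_card
    (t := Finset.univ.filter fun j => minus t j = 0 ∨ plus t j = 0) fun j hj => by
      have h3 := (Finset.mem_filter.1 hj).2
      have h4 := plus_add_minus t j
      rw [hsig, show (16 : ℤ) = 4 ^ 2 by norm_num, sq_eq_sq_iff_eq_or_eq_neg] at h3
      rw [Finset.mem_filter]
      refine ⟨Finset.mem_univ j, ?_⟩
      omega
  have := key hu'
  omega

lemma false_six (hu : Bad 6 u) : False := by
  have key : ∀ {u}, Bad 6 u → 13 ≤ cnt u 16 + 3 * cnt u 36 := fun {u} hu => by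
    have h1 := hu.even_le rfl le_rfl
    omega
  obtain ⟨t, ht, hl, u', hu', hsig⟩ := hu.exists_nonneg (by
    have h1 := key hu
    have h2 := hu.cnt_sum_le
    norm_num
    omega)
  have h1 := search6_sound ht hl
  have h2 : cnt u' 36 ≤ _ := Finset.card_le_card
    (t := Finset.univ.filter fun j => minus t j = 0 ∨ plus t j = 0) fun j hj => by
      have h3 := (Finset.mem_filter.1 hj).2
      have h4 := plus_add_minus t j
      rw [hsig, show (36 : ℤ) = 6 ^ 2 by norm_num, sq_eq_sq_iff_eq_or_eq_neg] at h3
      rw [Finset.mem_filter]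
      refine ⟨Finset.mem_univ j, ?_⟩
      omega
  have h5 : cnt u' 16 + cnt u' 36 ≤
      (Finset.univ.filter fun j => minus t j ≤ 1 ∨ plus t j ≤ 1).card := by
    rw [← Finset.card_union_of_disjoint (Finset.disjoint_filter.2 fun j _ h => by rw [h]; norm_num)]
    refine Finset.card_le_card fun j hj => ?_
    rw [Finset.mem_union, Finset.mem_filter, Finset.mem_filter] at hj
    have h4 := plus_add_minus t j
    rw [hsig, show (16 : ℤ) = 4 ^ 2 by norm_num, show (36 : ℤ) = 6 ^ 2 by norm_num,
      sq_eq_sq_iff_eq_or_eq_neg, sq_eq_sq_iff_eq_or_eq_neg] at hj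
    rw [Finset.mem_filter]
    refine ⟨Finset.mem_univ j, ?_⟩
    omega
  have := key hu'
  omega

/-- In weight 7, a coordinate `±3` of `H u` determines the pair of places where its terms
disagree in sign with the sum. -/
lemma card_minority (hu : Bad 7 u) {s : ℤ} (hs : s = 1 ∨ s = -1) {j : P1}
    (h : s * sig u j = 3) : (Finset.univ.filter fun i => s * (H j i * u i) = -1).card = 2 := by
  have h1 := hu.sum_sub s j
  rw [h] at h1
  have h2 : ∑ i, (u i ^ 2 - s * (H j i * u i)) =
      ∑ i, 2 * if s * (H j i * u i) = -1 then (1 : ℤ) else 0 := by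
    refine Finset.sum_congr rfl fun i _ => ?_
    rcases hs with rfl | rfl <;> rcases hu.trit i with h | h | h <;>
      rcases H_pm j i with h' | h' <;> simp [h, h']
  rw [h2, ← Finset.mul_sum, Finset.sum_boole] at h1
  have h3 : (((Finset.univ.filter fun i => s * (H j i * u i) = -1).card : ℕ) : ℤ) = 2 := by
    norm_num at h1
    linarith
  exact_mod_cast h3

/-- Since 24 rows have a coordinate `±3` but the support has only 21 pairs, two of these rows
agree up to sign on the support. -/
lemma exists_seven (hu : Bad 7 u) : ∃ u', Bad 7 u' ∧ (∀ i, H (some 0) i * u' i = u' i) ∧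
    (Finset.univ.filter fun i => u' i = -1).card = 2 := by
  have hsgn : ∀ j ∈ Finset.univ.filter fun j => sig u j ^ 2 = 9,
      ∃ s : ℤ, (s = 1 ∨ s = -1) ∧ s * sig u j = 3 := fun j hj => by
    have h9 := (Finset.mem_filter.1 hj).2
    rw [show (9 : ℤ) = 3 ^ 2 by norm_num] at h9
    rcases sq_eq_sq_iff_eq_or_eq_neg.1 h9 with h | h
    · exact ⟨1, Or.inl rfl, by rw [h]; ring⟩
    · exact ⟨-1, Or.inr rfl, by rw [h]; ring⟩
  choose! sgn hs h3 using hsgn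
  have hval : ∀ {s : ℤ}, (s = 1 ∨ s = -1) → ∀ j i,
      s * (H j i * u i) = u i ^ 2 - 2 * if s * (H j i * u i) = -1 then 1 else 0 := by
    intro s hs j i
    rcases hs with rfl | rfl <;> rcases hu.trit i with h | h | h <;>
      rcases H_pm j i with h' | h' <;> simp [h, h']
  obtain ⟨j₁, hj₁, j₂, hj₂, hj, hM⟩ := Finset.exists_ne_map_eq_of_card_lt_of_maps_to
    (s := Finset.univ.filter fun j => sig u j ^ 2 = 9)
    (t := Finset.powersetCard 2 (Finset.univ.filter fun i => u i ≠ 0))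
    (f := fun j => Finset.univ.filter fun i => sgn j * (H j i * u i) = -1)
    (by
      rw [Finset.card_powersetCard, hu.supp]
      exact lt_of_lt_of_le (by decide) hu.card_nine)
    (fun j hj => by
      rw [Finset.mem_coe, Finset.mem_powersetCard]
      refine ⟨fun i hi => ?_, hu.card_minority (hs j hj) (h3 j hj)⟩
      rw [Finset.mem_filter] at hi ⊢
      refine ⟨hi.1, fun h => ?_⟩
      rw [h] at hi
      simp at hi)
  obtain ⟨j, s, ⟨hs, hp⟩, π, u', hu', hdef, h0⟩ := hu.normalize
    (fun j s => (s = 1 ∨ s = -1) ∧ s * sig u j = 3) hj (hs _ hj₁) (hs _ hj₂)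
    ⟨hs _ hj₁, h3 _ hj₁⟩ ⟨hs _ hj₂, h3 _ hj₂⟩ fun i => by
      rw [hval (hs _ hj₁) j₁ i, hval (hs _ hj₂) j₂ i]
      have hi := Finset.ext_iff.1 hM i
      simp only [Finset.mem_filter, Finset.mem_univ, true_and] at hi
      rw [if_congr hi rfl rfl]
  refine ⟨u', hu', h0, ?_⟩
  rw [← hu.card_minority hs hp]
  refine Finset.card_equiv π fun i => ?_
  simp [hdef]

lemma false_seven (hu : Bad 7 u) : False := by
  obtain ⟨u, hu, h0, h2⟩ := hu.exists_seven
  have hcols : ∀ {u : P1 → ℤ}, (∀ i, H (some 0) i * u i = u i) → ∀ i, u i ≠ 0 → i ∈ cols :=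
    fun h0 i h => (mem_cols i).2 (mul_right_cancel₀ h ((h0 i).trans (one_mul _).symm))
  -- Scaling by a square moves one of the two entries `-1` to the place `30 = -1`.
  obtain ⟨u, hu, h0, i, hi, h2⟩ : ∃ u', Bad 7 u' ∧ (∀ i, H (some 0) i * u' i = u' i) ∧
      ∃ i, i ≠ some 30 ∧ (Finset.univ.filter fun i => u' i = -1) = {some 30, i} := by
    obtain ⟨c, hc, hc0⟩ : ∃ c : ZMod 31, u (some c) = -1 ∧ c ≠ 0 := by
      obtain ⟨i, hi, hi0⟩ := Finset.exists_mem_ne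
        (show 1 < (Finset.univ.filter fun i => u i = -1).card by rw [h2]; norm_num) (some 0)
      have hi := (Finset.mem_filter.1 hi).2
      have hm := hcols h0 i (by rw [hi]; norm_num)
      rcases i with _ | c
      · exact absurd hm (by decide)
      · exact ⟨c, hi, fun h => hi0 (by rw [h])⟩
    have hres : ∀ c : ZMod 31, c ≠ 0 → some c ∈ cols → isRes (-c) = true := by decide +kernel
    have hr := hres c hc0 (hcols h0 _ (by rw [hc]; norm_num))
    have hfield : ∀ a : ZMod 31, a ≠ 0 → a * a ^ 29 = 1 := by decide +kernel
    have hinv := hfield (-c) (neg_ne_zero.2 hc0)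
    let a : (ZMod 31)ˣ := ⟨-c, (-c) ^ 29, hinv, by rw [mul_comm]; exact hinv⟩
    have haut := isAut_scale a hr
    have h30 : scale a (some 30) = some c := by
      have h : (-c) * 30 = c := by
        have h30 : (30 : ZMod 31) = -1 := by decide
        rw [h30]; ring
      exact congrArg some h
    have hzero : scale a (some 0) = some 0 := congrArg some (mul_zero _)
    have hu' := hu.map haut (Or.inl rfl : (1 : ℤ) = 1 ∨ (1 : ℤ) = -1)
    simp only [one_mul] at hu'
    have hcard : (Finset.univ.filter fun i => u (scale a i) = -1).card = 2 := by
      rw [← h2]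
      exact Finset.card_equiv (scale a) fun i => by simp
    have hmem : some 30 ∈ Finset.univ.filter fun i => u (scale a i) = -1 := by
      simp [h30, hc]
    obtain ⟨i, hi⟩ := Finset.card_eq_one.1 ((Finset.card_erase_of_mem hmem).trans (by rw [hcard]))
    refine ⟨_, hu', fun i => ?_, i, ?_, ?_⟩
    · have h := haut.map (some 0) i
      rw [hzero, one_mul, one_mul] at h
      rw [← h, h0]
    · exact Finset.ne_of_mem_erase (hi ▸ Finset.mem_singleton_self i)
    · rw [← Finset.insert_erase hmem, hi]
  have hneg : ∀ k, u k = -1 ↔ k = some 30 ∨ k = i := fun k => by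
    have := Finset.ext_iff.1 h2 k
    simpa using this
  have hicol : i ∈ cols := hcols h0 i (by rw [(hneg i).2 (Or.inr rfl)]; norm_num)
  set L := cols.filter fun j => j != some 30 && j != i with hL
  have hLnd : L.Nodup := nodup_cols.filter _
  have hone : (L.filter fun k => u k = 1).toFinset = Finset.univ.filter fun k => u k = 1 := by
    ext k
    simp only [hL, List.mem_toFinset, List.mem_filter, decide_eq_true_eq, Finset.mem_filter,
      Finset.mem_univ, true_and, and_iff_right_iff_imp, Bool.and_eq_true, bne_iff_ne]
    intro h
    refine ⟨hcols h0 k (by rw [h]; norm_num), ?_⟩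
    rw [← not_or, ← hneg, h]
    norm_num
  have hsplit : (Finset.univ.filter fun k => u k ≠ 0) =
      (Finset.univ.filter fun k => u k = 1) ∪ (Finset.univ.filter fun k => u k = -1) := by
    ext k
    rcases hu.trit k with h | h | h <;> simp [h]
  have hdisj : Disjoint (Finset.univ.filter fun k => u k = 1)
      (Finset.univ.filter fun k => u k = -1) :=
    Finset.disjoint_filter.2 fun k _ h => by rw [h]; norm_num
  have hlen : (L.filter fun k => u k = 1).length = 5 := by
    rw [← List.toFinset_card_of_nodup (hLnd.filter _), hone]
    have := hu.supp
    rw [hsplit, Finset.card_union_of_disjoint hdisj, h2, Finset.card_pair hi.symm] at this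
    omega
  obtain ⟨j, hj⟩ := search7_sound hicol hi List.filter_sublist hlen
  have hsum := plus_add_minus (L.filter fun k => u k = 1) j
  rw [hlen] at hsum
  have hsig : sig u j = (plus (L.filter fun k => u k = 1) j : ℤ)
      - minus (L.filter fun k => u k = 1) j - H j (some 30) - H j i := by
    have h1 : sig u j = ∑ k ∈ Finset.univ.filter (fun k => u k ≠ 0), H j k * u k := by
      rw [Finset.sum_filter]
      refine Finset.sum_congr rfl fun k _ => ?_
      split_ifs with h
      · rfl
      · rw [not_not.1 h, mul_zero]
    rw [h1, hsplit, Finset.sum_union hdisj, h2, Finset.sum_pair hi.symm,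
      (hneg i).2 (Or.inr rfl), (hneg (some 30)).2 (Or.inl rfl), ← sum_cols (hLnd.filter _), hone]
    rw [Finset.sum_congr rfl fun k hk => by rw [(Finset.mem_filter.1 hk).2, mul_one]]
    ring
  have h19 : sig u j = 1 ∨ sig u j = -1 ∨ sig u j = 3 ∨ sig u j = -3 := by
    rcases hu.sq_seven j with h | h
    · rw [show (1 : ℤ) = 1 ^ 2 by norm_num, sq_eq_sq_iff_eq_or_eq_neg] at h
      omega
    · rw [show (9 : ℤ) = 3 ^ 2 by norm_num, sq_eq_sq_iff_eq_or_eq_neg] at h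
      omega
  rw [hsig] at h19
  generalize plus _ j = x at *
  generalize minus _ j = y at *
  rcases H_pm j (some 30) with h30 | h30 <;> rcases H_pm j i with hji | hji <;>
    simp only [h30, hji] at hj h19 <;> norm_num at hj <;> omega

end Bad

lemma Bad.false_of_le {w : ℕ} {u : P1 → ℤ} (hu : Bad w u) (h1 : 1 ≤ w) (h7 : w ≤ 7) : False := by
  rcases Nat.mod_two_eq_zero_or_one w with h | h
  · obtain rfl | rfl | rfl : w = 2 ∨ w = 4 ∨ w = 6 := by omega
    · have h3 := hu.even_le rfl (by norm_num)
      have h4 := hu.cnt_eq_zero (k := 16) (by norm_num)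
      have h5 := hu.cnt_eq_zero (k := 36) (by norm_num)
      omega
    · exact hu.false_four
    · exact hu.false_six
  · obtain rfl := hu.odd_eq_seven h h7
    exact hu.false_seven

/-- The weight of a word modulo 3. -/
abbrev wt (Q : P1 → ℤ) : ℕ := (Finset.univ.filter fun ν => ¬ (3 : ℤ) ∣ Q ν).card

/-- The minimum weight bound for codewords `(H q, q)` in which `q` has weight at most 7. -/
lemma code_min_of_le {P Q : P1 → ℤ} (h : ∀ ν, (3 : ℤ) ∣ P ν - ∑ μ, H ν μ * Q μ)
    (hQ : wt Q ≤ 7) (hne : ∃ ν, ¬ (3 : ℤ) ∣ Q ν) : 16 ≤ wt P + wt Q := by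
  by_contra hlt
  set u : P1 → ℤ := fun i => (Q i + 1) % 3 - 1 with hu
  have hsig : ∀ j, (3 : ℤ) ∣ P j - sig u j := fun j => by
    have h1 : (3 : ℤ) ∣ ∑ μ, H j μ * Q μ - sig u j := by
      rw [sig, ← Finset.sum_sub_distrib]
      refine Finset.dvd_sum fun i _ => ?_
      rw [← mul_sub]
      refine Dvd.dvd.mul_left ?_ _
      simp only [hu]
      omega
    have := dvd_add (h j) h1
    rwa [sub_add_sub_cancel] at this
  have hsupp : (Finset.univ.filter fun i => u i ≠ 0).card = wt Q := by
    refine congrArg Finset.card (Finset.filter_congr fun i _ => ?_)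
    simp only [hu]
    omega
  have hfew : (Finset.univ.filter fun j => ¬ (3 : ℤ) ∣ sig u j).card = wt P := by
    refine congrArg Finset.card (Finset.filter_congr fun j _ => ?_)
    have := hsig j
    omega
  have hB : Bad (wt Q) u := ⟨fun i => by simp only [hu]; omega, hsupp, by omega⟩
  refine hB.false_of_le ?_ hQ
  obtain ⟨ν, hν⟩ := hne
  exact Finset.card_pos.2 ⟨ν, by simpa using hν⟩

/-- The map `x ↦ -x` of the projective line. -/
def neg : Equiv.Perm P1 := Equiv.optionCongr (Equiv.neg _)

/-- The signs accompanying `neg` in the monomial equivalence between `H` and its transpose. -/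
def negSign : P1 → ℤ
  | none => -1
  | some _ => 1

lemma H_neg : ∀ i j, H j i * negSign i = negSign j * H (neg i) (neg j) := by decide +kernel

lemma negSign_pm (i : P1) : negSign i = 1 ∨ negSign i = -1 := by
  rcases i with _ | i <;> simp [negSign]

lemma wt_neg {Q R : P1 → ℤ} (h : ∀ i, R i = Q (neg i) ∨ R i = - Q (neg i)) : wt R = wt Q := by
  refine Finset.card_equiv neg fun i => ?_
  rcases h i with h | h <;> simp [h]

/-- The ternary code `{(H q, q)}` has minimum weight at least 16. -/
theorem code_min {P Q : P1 → ℤ} (h : ∀ ν, (3 : ℤ) ∣ P ν - ∑ μ, H ν μ * Q μ)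
    (hne : ∃ ν, ¬ ((3 : ℤ) ∣ P ν ∧ (3 : ℤ) ∣ Q ν)) : 16 ≤ wt P + wt Q := by
  -- `Hᵀ H = 32 I ≡ -I`, so `P` determines `Q`.
  have hT : ∀ k, (3 : ℤ) ∣ ∑ i, H i k * P i + Q k := fun k => by
    have h1 : ∑ i, H i k * ∑ μ, H i μ * Q μ = 32 * Q k := by
      simp only [Finset.mul_sum, ← mul_assoc]
      rw [Finset.sum_comm]
      simp only [← Finset.sum_mul, H_gram, ite_mul, zero_mul, Finset.sum_ite_eq, Finset.mem_univ,
        if_true]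
    have h2 : (3 : ℤ) ∣ ∑ i, H i k * P i - ∑ i, H i k * ∑ μ, H i μ * Q μ := by
      rw [← Finset.sum_sub_distrib]
      refine Finset.dvd_sum fun i _ => ?_
      rw [← mul_sub]
      exact (h i).mul_left _
    rw [h1] at h2
    omega
  by_cases hQ : wt Q ≤ 7
  · refine code_min_of_le h hQ ?_
    by_contra! hall
    obtain ⟨ν, hν⟩ := hne
    refine hν ⟨?_, hall ν⟩
    rw [Int.dvd_iff_dvd_of_dvd_sub (h ν)]
    exact Finset.dvd_sum fun μ _ => (hall μ).mul_left _
  · by_cases hP : wt P ≤ 7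
    · have h1 : wt (fun i => negSign i * P (neg i)) = wt P :=
        wt_neg fun i => by rcases negSign_pm i with h | h <;> simp [h]
      have h2 : wt (fun i => -(negSign i * Q (neg i))) = wt Q :=
        wt_neg fun i => by rcases negSign_pm i with h | h <;> simp [h]
      have h3 : ∃ ν, ¬ (3 : ℤ) ∣ P ν := by
        by_contra! hall
        obtain ⟨ν, hν⟩ := hne
        refine hν ⟨hall ν, ?_⟩
        rw [← Int.dvd_add_right (Finset.dvd_sum fun i _ => (hall i).mul_left _)]
        exact hT ν
      rw [← h1, ← h2, add_comm]
      refine code_min_of_le (fun j => ?_) (by rw [h1]; exact hP) ?_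
      · have h4 : ∑ i, H j i * (negSign i * P (neg i)) =
            negSign j * ∑ i, H i (neg j) * P i := by
          rw [← Equiv.sum_comp neg (fun i => H i (neg j) * P i), Finset.mul_sum]
          refine Finset.sum_congr rfl fun i _ => ?_
          rw [← mul_assoc, H_neg, mul_assoc]
        rw [h4, ← neg_add', ← mul_add, dvd_neg, add_comm (Q _)]
        exact (hT _).mul_left _
      · obtain ⟨ν, hν⟩ := h3
        refine ⟨neg.symm ν, ?_⟩
        rcases negSign_pm (neg.symm ν) with h | h <;> simpa [h] using hν
    · omega

/-! ### The frame of 64 vectors -/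

lemma E8mat_eq (i j : Fin 8) : E8mat i j = (A8 i j : ℚ) := by
  fin_cases i <;> fin_cases j <;> norm_num [E8mat, A8]

open Matrix in
/-- Vectors dual to a `y` with `∑ yₖ yₖᵀ = m A8` satisfy the two frame identities. -/
lemma frame_sums {κ : Type} [Fintype κ] {m : ℤ} {y : κ → Fin 8 → ℤ}
    (hy : ∀ i j, ∑ k, y k i * y k j = m * A8 i j) :
    (∀ v, ∑ k, b (A8inv *ᵥ y k) v ^ 2 = m * b v v) ∧
      ∑ k, b (A8inv *ᵥ y k) (A8inv *ᵥ y k) = 8 * m := by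
  constructor
  · intro v
    have h1 : ∀ k, b (A8inv *ᵥ y k) v ^ 2 = ∑ i, ∑ j, v i * v j * (y k i * y k j) := fun k => by
      rw [b_dual, sq, dotProduct, Finset.sum_mul_sum]
      exact Finset.sum_congr rfl fun i _ => Finset.sum_congr rfl fun j _ => by ring
    simp only [h1]
    rw [Finset.sum_comm]
    simp only [b, dotProduct, mulVec, Finset.mul_sum]
    refine Finset.sum_congr rfl fun i _ => ?_
    rw [Finset.sum_comm]
    refine Finset.sum_congr rfl fun j _ => ?_
    rw [← Finset.mul_sum, hy]
    ring
  · have h1 : ∀ k, b (A8inv *ᵥ y k) (A8inv *ᵥ y k) = ∑ i, ∑ j, A8inv i j * (y k i * y k j) :=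
      fun k => by
        rw [b_dual]
        simp only [dotProduct, mulVec, Finset.mul_sum]
        exact Finset.sum_congr rfl fun i _ => Finset.sum_congr rfl fun j _ => by ring
    simp only [h1]
    rw [Finset.sum_comm]
    have h2 : ∀ i, ∑ k, ∑ j, A8inv i j * (y k i * y k j) = m * ∑ j, A8inv i j * A8 i j :=
      fun i => by
        rw [Finset.sum_comm, Finset.mul_sum]
        refine Finset.sum_congr rfl fun j _ => ?_
        rw [← Finset.mul_sum, hy]
        ring
    simp only [h2]
    rw [← Finset.mul_sum, mul_comm]
    congr 1

open Matrix in
theorem no_E8 (w : Fin 8 → P1 → Fin 2 → ℚ) (hw : ∀ i, w i ∈ LQ)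
    (hB : ∀ i j, Bf (w i) (w j) = 3 * E8mat i j) : False := by
  obtain ⟨P, Q, hPQ, hpar, hcode⟩ := exists_frame hw
  set y : P1 ⊕ P1 → Fin 8 → ℤ := Sum.elim P Q with hy
  set e : P1 ⊕ P1 → Fin 8 → ℤ := fun k => A8inv *ᵥ y k with he
  have hyy : ∀ i j, ∑ k, y k i * y k j = 36 * A8 i j := fun i j => by
    have h1 := hPQ i j
    rw [hB, E8mat_eq, Finset.sum_add_distrib] at h1
    rw [Fintype.sum_sum_type]
    simp only [hy, Sum.elim_inl, Sum.elim_inr]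
    have h2 : ((∑ ν, P ν i * P ν j + ∑ ν, Q ν i * Q ν j : ℤ) : ℚ) = (36 * A8 i j : ℤ) := by
      push_cast
      rw [h1]
      ring
    exact_mod_cast h2
  obtain ⟨hsq, htr⟩ := frame_sums hyy
  have hmin : ∀ v, (∃ k, ¬ (3 : ℤ) ∣ b (e k) v) →
      16 ≤ (Finset.univ.filter fun k => ¬ (3 : ℤ) ∣ b (e k) v).card := by
    rintro v ⟨k, hk⟩
    have h1 : ∀ ν, (3 : ℤ) ∣ P ν ⬝ᵥ v - ∑ μ, H ν μ * Q μ ⬝ᵥ v := fun ν => by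
      have : P ν ⬝ᵥ v - ∑ μ, H ν μ * Q μ ⬝ᵥ v
          = ∑ i, (P ν i - ∑ μ, H ν μ * Q μ i) * v i := by
        simp only [dotProduct, sub_mul, Finset.sum_sub_distrib, Finset.sum_mul, Finset.mul_sum]
        rw [Finset.sum_comm]
        simp only [mul_assoc]
      rw [this]
      exact Finset.dvd_sum fun i _ => (hcode i ν).mul_right _
    have h2 := code_min h1 (by
      rcases k with ν | ν
      · exact ⟨ν, fun h => hk (by simpa only [he, b_dual, hy, Sum.elim_inl] using h.1)⟩
      · exact ⟨ν, fun h => hk (by simpa only [he, b_dual, hy, Sum.elim_inr] using h.2)⟩)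
    refine h2.trans_eq ?_
    simp only [he, b_dual, wt, Finset.card_filter, Fintype.sum_sum_type, hy, Sum.elim_inl,
      Sum.elim_inr]
    congr!
  have hpar' : ∀ k k', ∃ f, e k = e k' + (2 : ℤ) • f := fun k k' => by
    have h1 : ∀ i, ∃ c, y k i - y k' i = 2 * c := fun i => by
      obtain ⟨c, hc⟩ := hpar i
      have h2 : ∀ k, (2 : ℤ) ∣ y k i - c := by
        rintro (ν | ν)
        · exact (hc ν).1
        · exact (hc ν).2
      have h3 := dvd_sub (h2 k) (h2 k')
      rwa [sub_sub_sub_cancel_right] at h3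
    choose c hc using h1
    refine ⟨A8inv *ᵥ c, ?_⟩
    rw [← sub_eq_iff_eq_add', ← mulVec_sub, ← mulVec_smul]
    congr 1
    funext i
    simpa using hc i
  have hT : Tight 36 e := ⟨hsq, htr, hmin⟩
  -- All members are congruent modulo `2E₈`, so either none or all of them lie in `2E₈`.
  by_cases hodd : ∃ k₀, ∀ f, e k₀ ≠ (2 : ℤ) • f
  · obtain ⟨k₀, hk₀⟩ := hodd
    refine hT.false_odd (by simp [ZMod.card]) hpar' fun k hk => ?_
    obtain ⟨f, hf⟩ := hpar' k₀ k
    exact hk₀ f (by rw [hf, hk, zero_add])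
  · push Not at hodd
    choose x hx using hodd
    have hb : ∀ k v, b (e k) v = 2 * b (x k) v := fun k v => by rw [hx, b_smul_left]
    have hdvd : ∀ k v, (3 : ℤ) ∣ b (e k) v ↔ (3 : ℤ) ∣ b (x k) v := fun k v => by
      rw [hb]; omega
    refine Tight.false_nine (e := x) ⟨fun v => ?_, ?_, fun v => ?_⟩
    · have h1 := hsq v
      have h2 : ∑ k, b (e k) v ^ 2 = 4 * ∑ k, b (x k) v ^ 2 := by
        rw [Finset.mul_sum]
        exact Finset.sum_congr rfl fun k _ => by rw [hb]; ring
      linarith [h1.symm.trans h2]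
    · have h2 : ∑ k, b (e k) (e k) = 4 * ∑ k, b (x k) (x k) := by
        rw [Finset.mul_sum]
        exact Finset.sum_congr rfl fun k _ => by rw [hb, hx k, b_smul_right]; ring
      linarith [htr.symm.trans h2]
    · have h1 := hmin v
      simp only [hdvd] at h1
      exact h1

end E8Q

/-- The lattice `L_Q` does not contain a sublattice isomorphic to `E₈(3)`: there are no
vectors `w₁, …, w₈ ∈ L_Q` with `⟨wᵢ, wⱼ⟩ = 3·(G_{E₈})ᵢⱼ` for all `i, j`. -/
theorem stmt_11 :
    ¬ ∃ w : Fin 8 → (P1 → Fin 2 → ℚ), (∀ i, w i ∈ LQ) ∧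
      ∀ i j, Bf (w i) (w j) = 3 * E8mat i j := by
  rintro ⟨w, hw, hB⟩
  exact E8Q.no_E8 w hw hB
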